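/- arXiv:math/9909139 — 4 statements merged into one kernel-verified Lean document; each statement's English description precedes it below -/
import Mathlib

section
/- Let m ≥ 1, n = 2m+1, and let a₁,…,aₙ be real numbers. Define G : (0,∞) → ℝ by G(t) = t^{2m−1} ∫_{S^{2m}} cos(tω₁a₁)·cos(tω₂a₂)⋯cos(tωₙaₙ) dσ(ω). Then G is (m times) differentiable and for every t > 0, cos(t·√(a₁²+⋯+aₙ²)) = (1/(2(2π)^m)) · (D^{m−1}G)′(t). -/
open MeasureTheory Real

/-- The operator `(Df)(t) = f'(t)/t` on real-valued functions. -/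
noncomputable def Dop (f : ℝ → ℝ) : ℝ → ℝ := fun t => deriv f t / t

/-
Put `n = 2m + 1`. Averaging `cos ⟪b, ω⟫` over all sign changes of the coordinates of `b` gives
`∏ i, cos (b i * ω i)`. Sphere integrals are rotation invariant, so the integral defining `G` is
that of the plane wave `cos (t ⟪a, ω⟫)`. Computing the integral of `⟪b, x⟫ ^ (2j) exp (-‖x‖²)` over
`ℝⁿ` in polar and in Cartesian coordinates shows that the `2j`-th moment of `⟪b, ·⟫` on the sphere
is `2 (2π)^m (2j - 1)‼ / (2j + 2m - 1)‼ ‖b‖ ^ (2j)`. On power series, integrating once and then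
applying `m - 1` times the right inverse `F ↦ ∫₀ᵗ s F(s) ds` of `Dop` multiplies the coefficient of
`t ^ (2j)` by the same quotient of double factorials and raises the exponent by `2m - 1`. Hence `G`
is that iterated primitive of `2 (2π)^m cos (t ‖a‖)`, and `m - 1` applications of `Dop` followed by
one differentiation undo it.
-/

open Metric
open scoped Nat RealInnerProductSpace

section PolarCoordinates

theorem integral_volumeIoiPow {F : Type*} [NormedAddCommGroup F] [NormedSpace ℝ F] (n : ℕ)
    (h : ℝ → F) :
    ∫ r : Set.Ioi (0 : ℝ), h r ∂Measure.volumeIoiPow n = ∫ r in Set.Ioi 0, r ^ n • h r := by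
  simp only [Measure.volumeIoiPow, ENNReal.ofReal]
  rw [integral_withDensity_eq_integral_smul (measurable_subtype_coe.pow_const n).real_toNNReal,
    integral_subtype_comap measurableSet_Ioi fun r ↦ (r ^ n).toNNReal • h r]
  refine setIntegral_congr_fun measurableSet_Ioi fun r hr ↦ ?_
  rw [NNReal.smul_def, coe_toNNReal _ (pow_nonneg (le_of_lt hr) n)]

theorem integral_homogeneous_mul_fun_norm {E : Type*} [NormedAddCommGroup E] [NormedSpace ℝ E]
    [FiniteDimensional ℝ E] [Nontrivial E] [MeasurableSpace E] [BorelSpace E] (μ : Measure E)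
    [μ.IsAddHaarMeasure] {f : E → ℝ} {k : ℕ}
    (hf : ∀ r : ℝ, 0 < r → ∀ x, f (r • x) = r ^ k * f x) (h : ℝ → ℝ) :
    ∫ x, f x * h ‖x‖ ∂μ = (∫ ω : sphere (0 : E) 1, f ω ∂μ.toSphere) *
      ∫ r in Set.Ioi 0, r ^ (Module.finrank ℝ E - 1 + k) * h r := by
  set n := Module.finrank ℝ E - 1
  have hpolar (x : ({0}ᶜ : Set E)) : f x * h ‖(x : E)‖ =
      f (homeomorphUnitSphereProd E x).1 *
        (((homeomorphUnitSphereProd E x).2 : ℝ) ^ k * h (homeomorphUnitSphereProd E x).2) := by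
    have hx : 0 < ‖(x : E)‖ := norm_pos_iff.2 x.2
    have hfx := hf ‖(x : E)‖ hx (‖(x : E)‖⁻¹ • (x : E))
    rw [smul_inv_smul₀ hx.ne'] at hfx
    simp only [homeomorphUnitSphereProd_apply_fst_coe, homeomorphUnitSphereProd_apply_snd_coe, hfx]
    ring
  calc
    ∫ x, f x * h ‖x‖ ∂μ
      = ∫ x : ({0}ᶜ : Set E), f x * h ‖(x : E)‖ ∂(μ.comap (↑)) := by
        rw [integral_subtype_comap (measurableSet_singleton _).compl fun x ↦ f x * h ‖x‖,
          restrict_compl_singleton]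
    _ = ∫ p : sphere (0 : E) 1 × Set.Ioi (0 : ℝ), f p.1 * ((p.2 : ℝ) ^ k * h p.2)
          ∂μ.toSphere.prod (.volumeIoiPow n) := by
        simp_rw [hpolar]
        exact μ.measurePreserving_homeomorphUnitSphereProd.integral_comp
          (Homeomorph.measurableEmbedding _)
          fun p : sphere (0 : E) 1 × Set.Ioi (0 : ℝ) ↦ f p.1 * ((p.2 : ℝ) ^ k * h p.2)
    _ = (∫ ω : sphere (0 : E) 1, f ω ∂μ.toSphere) *
          ∫ r : Set.Ioi (0 : ℝ), (r : ℝ) ^ k * h r ∂.volumeIoiPow n :=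
        integral_prod_mul (fun ω : sphere (0 : E) 1 ↦ f ω)
          fun r : Set.Ioi (0 : ℝ) ↦ (r : ℝ) ^ k * h r
    _ = (∫ ω : sphere (0 : E) 1, f ω ∂μ.toSphere) * ∫ r in Set.Ioi 0, r ^ (n + k) * h r := by
        rw [integral_volumeIoiPow n fun r ↦ r ^ k * h r]
        simp only [smul_eq_mul, pow_add, mul_assoc]

end PolarCoordinates

section GaussianIntegrals

theorem integral_Ioi_pow_mul_exp_neg_sq (k : ℕ) :
    ∫ r in Set.Ioi (0 : ℝ), r ^ k * exp (-r ^ 2) = Gamma ((k + 1) / 2) / 2 := by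
  have hk : (-1 : ℝ) < k := by linarith [k.cast_nonneg (α := ℝ)]
  have h := integral_rpow_mul_exp_neg_rpow two_pos hk
  simp only [rpow_natCast, rpow_two] at h
  rw [h, one_div_mul_eq_div]

theorem integral_even_pow_mul_exp_neg_sq (j : ℕ) :
    ∫ y : ℝ, y ^ (2 * j) * exp (-y ^ 2) = Gamma (j + 1 / 2) := by
  calc
    ∫ y : ℝ, y ^ (2 * j) * exp (-y ^ 2) = ∫ y : ℝ, |y| ^ (2 * j) * exp (-|y| ^ 2) := by
      simp only [pow_mul, sq_abs]
    _ = 2 * (Gamma (((2 * j : ℕ) + 1) / 2) / 2) := by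
      rw [integral_comp_abs (f := fun y ↦ y ^ (2 * j) * exp (-y ^ 2)),
        integral_Ioi_pow_mul_exp_neg_sq]
    _ = Gamma (j + 1 / 2) := by
      rw [mul_div_cancel₀ _ two_ne_zero, Nat.cast_mul, Nat.cast_ofNat, add_div,
        mul_div_cancel_left₀ _ two_ne_zero]

theorem integral_coord_mul_exp_neg_norm_sq {ι : Type*} [Fintype ι] (i : ι) (g : ℝ → ℝ) :
    ∫ x : EuclideanSpace ℝ ι, g (x i) * exp (-‖x‖ ^ 2) =
      √π ^ (Fintype.card ι - 1) * ∫ y, g y * exp (-y ^ 2) := by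
  classical
  let factor (k : ι) (y : ℝ) : ℝ := (if k = i then g y else 1) * exp (-y ^ 2)
  have hprod (x : ι → ℝ) :
      g (WithLp.toLp 2 x i) * exp (-‖WithLp.toLp 2 x‖ ^ 2) = ∏ k, factor k (x k) := by
    rw [EuclideanSpace.real_norm_sq_eq, Finset.prod_mul_distrib, ← exp_sum, Finset.sum_neg_distrib,
      Fintype.prod_ite_eq']
  have hgauss : ∀ k ∈ ({i}ᶜ : Finset ι), ∫ y, factor k y = √π := fun k hk ↦ by
    have hki : k ≠ i := by simpa using hk
    simpa [factor, hki] using integral_gaussian 1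
  rw [← (PiLp.volume_preserving_toLp ι).integral_comp
    (MeasurableEquiv.toLp 2 _).measurableEmbedding]
  simp_rw [hprod]
  rw [integral_fintype_prod_volume_eq_prod factor, Fintype.prod_eq_mul_prod_compl i,
    Finset.prod_congr rfl hgauss, Finset.prod_const, Finset.card_compl, Finset.card_singleton,
    mul_comm]
  simp only [factor, if_pos]

end GaussianIntegrals

section SphereIntegrals

variable {E : Type*} [NormedAddCommGroup E] [InnerProductSpace ℝ E] [FiniteDimensional ℝ E]
  [MeasurableSpace E] [BorelSpace E]

theorem integral_inner_orthonormalBasis_mul_exp_neg_norm_sq {ι : Type*} [Fintype ι]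
    (v : OrthonormalBasis ι ℝ E) (i : ι) (g : ℝ → ℝ) :
    ∫ x, g ⟪v i, x⟫ * exp (-‖x‖ ^ 2) =
      √π ^ (Module.finrank ℝ E - 1) * ∫ y, g y * exp (-y ^ 2) := by
  rw [Module.finrank_eq_card_basis v.toBasis, ← integral_coord_mul_exp_neg_norm_sq i g,
    ← v.measurePreserving_repr.integral_comp v.repr.toHomeomorph.measurableEmbedding]
  simp only [v.repr_apply_apply, v.repr.norm_map]

theorem integral_sphere_comp_linearIsometryEquiv [Nontrivial E] (L : E ≃ₗᵢ[ℝ] E) (f : E → ℝ) :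
    ∫ ω : sphere (0 : E) 1, f (L ω) ∂volume.toSphere =
      ∫ ω : sphere (0 : E) 1, f ω ∂volume.toSphere := by
  have hpolar (g : E → ℝ) : ∫ x : E, g (‖x‖⁻¹ • x) * exp (-‖x‖ ^ 2) =
      (∫ ω : sphere (0 : E) 1, g ω ∂volume.toSphere) *
        (Gamma (((Module.finrank ℝ E - 1 : ℕ) + 1) / 2) / 2) := by
    have hdeg (r : ℝ) (hr : 0 < r) (x : E) :
        g (‖r • x‖⁻¹ • r • x) = r ^ 0 * g (‖x‖⁻¹ • x) := by
      rw [norm_smul, norm_of_nonneg hr.le, mul_inv, smul_smul, mul_right_comm,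
        inv_mul_cancel₀ hr.ne', one_mul, pow_zero, one_mul]
    rw [integral_homogeneous_mul_fun_norm volume hdeg fun r ↦ exp (-r ^ 2), add_zero,
      integral_Ioi_pow_mul_exp_neg_sq]
    simp only [norm_eq_of_mem_sphere, inv_one, one_smul]
  have hrot : ∫ x : E, f (L (‖x‖⁻¹ • x)) * exp (-‖x‖ ^ 2) =
      ∫ x : E, f (‖x‖⁻¹ • x) * exp (-‖x‖ ^ 2) := by
    simpa only [L.norm_map, map_smul] using L.measurePreserving.integral_comp
      L.toHomeomorph.measurableEmbedding fun x ↦ f (‖x‖⁻¹ • x) * exp (-‖x‖ ^ 2)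
  rw [hpolar (fun x ↦ f (L x)), hpolar f] at hrot
  exact mul_right_cancel₀ (by positivity) hrot

theorem integral_sphere_comp_inner_of_norm_eq [Nontrivial E] {b c : E} (hbc : ‖b‖ = ‖c‖)
    (f : ℝ → ℝ) :
    ∫ ω : sphere (0 : E) 1, f ⟪b, (ω : E)⟫ ∂volume.toSphere =
      ∫ ω : sphere (0 : E) 1, f ⟪c, (ω : E)⟫ ∂volume.toSphere := by
  set R := (ℝ ∙ (b - c))ᗮ.reflection
  have hR : R b = c := Submodule.reflection_sub hbc
  rw [← integral_sphere_comp_linearIsometryEquiv R fun x ↦ f ⟪c, x⟫]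
  simp only [← hR, R.inner_map_map]

theorem integral_sphere_inner_even_pow [Nontrivial E] (b : E) (j : ℕ) :
    ∫ ω : sphere (0 : E) 1, ⟪b, (ω : E)⟫ ^ (2 * j) ∂volume.toSphere =
      2 * √π ^ (Module.finrank ℝ E - 1) * Gamma (j + 1 / 2) /
        Gamma (j + (Module.finrank ℝ E : ℝ) / 2) * ‖b‖ ^ (2 * j) := by
  have hn : 0 < Module.finrank ℝ E := Module.finrank_pos
  let v := stdOrthonormalBasis ℝ E
  let i : Fin (Module.finrank ℝ E) := ⟨0, hn⟩
  have hunit : (∫ ω : sphere (0 : E) 1, ⟪v i, (ω : E)⟫ ^ (2 * j) ∂volume.toSphere) *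
      (Gamma (j + (Module.finrank ℝ E : ℝ) / 2) / 2) =
      √π ^ (Module.finrank ℝ E - 1) * Gamma (j + 1 / 2) := by
    have hpolar := integral_homogeneous_mul_fun_norm volume (f := fun x ↦ ⟪v i, x⟫ ^ (2 * j))
      (fun r _ x ↦ by rw [inner_smul_right, mul_pow]) fun r ↦ exp (-r ^ 2)
    rw [integral_inner_orthonormalBasis_mul_exp_neg_norm_sq v i fun y ↦ y ^ (2 * j),
      integral_even_pow_mul_exp_neg_sq, integral_Ioi_pow_mul_exp_neg_sq] at hpolar
    rw [hpolar]
    congr 3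
    push_cast [Nat.cast_sub hn]
    ring
  have hb : ‖b‖ = ‖‖b‖ • v i‖ := by simp [norm_smul]
  rw [integral_sphere_comp_inner_of_norm_eq hb fun y ↦ y ^ (2 * j)]
  simp_rw [real_inner_smul_left, mul_pow]
  have hΓ : 0 < Gamma (j + (Module.finrank ℝ E : ℝ) / 2) := Gamma_pos_of_pos (by positivity)
  rw [integral_const_mul, mul_comm]
  congr 1
  rw [eq_div_iff hΓ.ne']
  linear_combination 2 * hunit

-- For `j = 0` the truncated subtraction `2 * j - 1` gives `0‼ = 1`, the usual value of `(-1)‼`.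
theorem integral_sphere_inner_even_pow_of_finrank_odd {m : ℕ} (hE : Module.finrank ℝ E = 2 * m + 1)
    (b : E) (j : ℕ) :
    ∫ ω : sphere (0 : E) 1, ⟪b, (ω : E)⟫ ^ (2 * j) ∂volume.toSphere =
      2 * (2 * π) ^ m * ((2 * j - 1)‼ / (2 * (j + m) - 1)‼) * ‖b‖ ^ (2 * j) := by
  have : Nontrivial E := Module.nontrivial_of_finrank_pos (R := ℝ) (by lia)
  have hΓ : Gamma (j + ((2 * m + 1 : ℕ) : ℝ) / 2) =
      (2 * (j + m) - 1 : ℕ)‼ * √π / 2 ^ (j + m) := by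
    rw [← Gamma_nat_add_half]
    congr 1
    push_cast
    ring
  have hπ : √π ^ (2 * m) = π ^ m := by rw [pow_mul, sq_sqrt pi_pos.le]
  have hfac : ((2 * (j + m) - 1)‼ : ℝ) ≠ 0 := mod_cast (Nat.doubleFactorial_pos _).ne'
  rw [integral_sphere_inner_even_pow, hE, hΓ, Gamma_nat_add_half, Nat.add_sub_cancel, hπ]
  field

theorem hasSum_integral_sphere_comp_inner {m : ℕ} (hE : Module.finrank ℝ E = 2 * m + 1)
    {c : ℕ → ℝ} {f : ℝ → ℝ} (hf : ∀ x, HasSum (fun j ↦ c j * x ^ (2 * j)) (f x)) (b : E) :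
    HasSum (fun j ↦ 2 * (2 * π) ^ m * c j * ((2 * j - 1)‼ / (2 * (j + m) - 1)‼) * ‖b‖ ^ (2 * j))
      (∫ ω : sphere (0 : E) 1, f ⟪b, (ω : E)⟫ ∂volume.toSphere) := by
  have hbound (j : ℕ) (ω : sphere (0 : E) 1) :
      ‖c j * ⟪b, (ω : E)⟫ ^ (2 * j)‖ ≤ |c j * ‖b‖ ^ (2 * j)| := by
    have hω : |⟪b, (ω : E)⟫| ≤ ‖b‖ := by
      simpa only [norm_eq_of_mem_sphere, mul_one] using abs_real_inner_le_norm b (ω : E)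
    rw [norm_eq_abs, abs_mul, abs_mul, abs_pow, abs_pow, abs_norm]
    gcongr
  have hsum := hasSum_integral_of_dominated_convergence
    (μ := volume.toSphere) (F := fun j (ω : sphere (0 : E) 1) ↦ c j * ⟪b, (ω : E)⟫ ^ (2 * j))
    (f := fun ω ↦ f ⟪b, (ω : E)⟫) (fun j _ ↦ |c j * ‖b‖ ^ (2 * j)|)
    (fun j ↦ Continuous.aestronglyMeasurable (by fun_prop))
    (fun j ↦ .of_forall (hbound j)) (.of_forall fun _ ↦ (hf ‖b‖).summable.abs)
    (integrable_const _) (.of_forall fun ω ↦ hf ⟪b, (ω : E)⟫)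
  refine hsum.congr_fun fun j ↦ ?_
  rw [integral_const_mul, integral_sphere_inner_even_pow_of_finrank_odd hE]
  ring

end SphereIntegrals

section ProductOfCosines

variable {ι : Type*} [Fintype ι]

theorem sum_signs_cos_sum [DecidableEq ι] (θ : ι → ℝ) :
    ∑ ε : ι → ℤˣ, cos (∑ i, ((ε i : ℤ) : ℝ) * θ i) = 2 ^ Fintype.card ι * ∏ i, cos (θ i) := by
  have hexp : ∑ ε : ι → ℤˣ, Complex.exp ((∑ i, ((ε i : ℤ) : ℝ) * θ i : ℝ) * Complex.I) =
      ((2 ^ Fintype.card ι * ∏ i, cos (θ i) : ℝ) : ℂ) := by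
    calc
      ∑ ε : ι → ℤˣ, Complex.exp ((∑ i, ((ε i : ℤ) : ℝ) * θ i : ℝ) * Complex.I)
        = ∑ ε : ι → ℤˣ, ∏ i, Complex.exp ((ε i : ℤ) * θ i * Complex.I) := by
          push_cast
          simp only [Finset.sum_mul, Complex.exp_sum]
      _ = ∏ i, ∑ s : ℤˣ, Complex.exp ((s : ℤ) * θ i * Complex.I) :=
          (Fintype.prod_sum fun i (s : ℤˣ) ↦ Complex.exp ((s : ℤ) * θ i * Complex.I)).symm
      _ = ∏ i, 2 * Complex.cos (θ i) := by
          refine Finset.prod_congr rfl fun i _ ↦ ?_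
          rw [Complex.two_cos, UnitsInt.univ, Finset.sum_pair (by decide)]
          simp
      _ = ((2 ^ Fintype.card ι * ∏ i, cos (θ i) : ℝ) : ℂ) := by
          push_cast
          rw [Finset.prod_mul_distrib, Finset.prod_const, Finset.card_univ]
  have hre := congrArg Complex.re hexp
  simpa only [Complex.re_sum, Complex.exp_ofReal_mul_I_re, Complex.ofReal_re] using hre

theorem integral_sphere_prod_cos [Nonempty ι] (b : EuclideanSpace ℝ ι) :
    ∫ ω : sphere (0 : EuclideanSpace ℝ ι) 1, ∏ i, cos (b i * (ω : EuclideanSpace ℝ ι) i)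
        ∂volume.toSphere =
      ∫ ω : sphere (0 : EuclideanSpace ℝ ι) 1, cos ⟪b, (ω : EuclideanSpace ℝ ι)⟫
        ∂volume.toSphere := by
  classical
  let signed (ε : ι → ℤˣ) : EuclideanSpace ℝ ι := WithLp.toLp 2 fun i ↦ ((ε i : ℤ) : ℝ) * b i
  have hnorm (ε : ι → ℤˣ) : ‖signed ε‖ = ‖b‖ := by
    have habs (i : ι) : |((ε i : ℤ) : ℝ)| = 1 := mod_cast Int.isUnit_iff_abs_eq.1 (ε i).isUnit
    simp only [EuclideanSpace.norm_eq, signed, norm_mul, norm_eq_abs, habs, one_mul]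
  have hinner (ε : ι → ℤˣ) (ω : EuclideanSpace ℝ ι) :
      ⟪signed ε, ω⟫ = ∑ i, ((ε i : ℤ) : ℝ) * (b i * ω i) := by
    simp only [PiLp.inner_apply, RCLike.inner_apply, conj_trivial, signed]
    exact Finset.sum_congr rfl fun i _ ↦ by ring
  have hcard : (Fintype.card (ι → ℤˣ) : ℝ) = 2 ^ Fintype.card ι := by simp
  refine mul_left_cancel₀ (pow_ne_zero (Fintype.card ι) (two_ne_zero (α := ℝ))) ?_
  rw [← integral_const_mul]
  simp_rw [← sum_signs_cos_sum, ← hinner]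
  rw [integral_finsetSum _ fun ε _ ↦
      (Continuous.integrable_of_hasCompactSupport (by fun_prop) (.of_compactSpace _)),
    Finset.sum_congr rfl fun ε _ ↦ integral_sphere_comp_inner_of_norm_eq (hnorm ε) cos,
    Finset.sum_const, Finset.card_univ, nsmul_eq_mul, hcard]

end ProductOfCosines

section IteratedPrimitive

theorem hasSum_intervalIntegral_pow {ι : Type*} [Countable ι] {c : ι → ℝ} {p : ι → ℕ} {f : ℝ → ℝ}
    (hf : ∀ t, HasSum (fun i ↦ c i * t ^ p i) (f t)) (t : ℝ) :
    HasSum (fun i ↦ c i / (p i + 1) * t ^ (p i + 1)) (∫ s in 0..t, f s) := by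
  have hbound (i : ι) (s : ℝ) (hs : s ∈ Set.uIoc 0 t) : ‖c i * s ^ p i‖ ≤ |c i * t ^ p i| := by
    have hst : |s| ≤ |t| := by
      simpa only [sub_zero] using Set.abs_sub_left_of_mem_uIcc (Set.uIoc_subset_uIcc hs)
    rw [norm_eq_abs, abs_mul, abs_mul, abs_pow, abs_pow]
    gcongr
  have hsum := intervalIntegral.hasSum_integral_of_dominated_convergence (μ := volume)
    (a := 0) (b := t) (F := fun i s ↦ c i * s ^ p i) (f := f) (fun i _ ↦ |c i * t ^ p i|)
    (fun i ↦ Continuous.aestronglyMeasurable (by fun_prop))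
    (fun i ↦ .of_forall (hbound i)) (.of_forall fun _ _ ↦ (hf t).summable.abs)
    intervalIntegrable_const (.of_forall fun s _ ↦ hf s)
  refine hsum.congr_fun fun i ↦ ?_
  rw [intervalIntegral.integral_const_mul, integral_pow, zero_pow (p i).succ_ne_zero, sub_zero,
    div_mul_eq_mul_div, mul_div_assoc]

/-- The function obtained from `f` by taking the primitive vanishing at `0` and then applying `k`
times the right inverse `F ↦ (t ↦ ∫ s in 0..t, s * F s)` of `Dop`. -/
noncomputable def iteratedPrimitive (f : ℝ → ℝ) : ℕ → ℝ → ℝ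
  | 0 => fun t ↦ ∫ s in 0..t, f s
  | k + 1 => fun t ↦ ∫ s in 0..t, s * iteratedPrimitive f k s

theorem hasSum_iteratedPrimitive {ι : Type*} [Countable ι] {c : ι → ℝ} {p : ι → ℕ} {f : ℝ → ℝ}
    (hf : ∀ t, HasSum (fun i ↦ c i * t ^ p i) (f t)) (k : ℕ) (t : ℝ) :
    HasSum (fun i ↦ c i * ((p i - 1)‼ / (p i + 2 * k + 1)‼) * t ^ (p i + 2 * k + 1))
      (iteratedPrimitive f k t) := by
  have hfac (n : ℕ) : (n‼ : ℝ) ≠ 0 := mod_cast n.doubleFactorial_pos.ne'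
  induction k generalizing t with
  | zero =>
    refine (hasSum_intervalIntegral_pow hf t).congr_fun fun i ↦ ?_
    have := hfac (p i - 1)
    rw [mul_zero, add_zero, Nat.doubleFactorial_add_one]
    push_cast
    field
  | succ k ih =>
    have hmul (s : ℝ) : HasSum
        (fun i ↦ c i * ((p i - 1)‼ / (p i + 2 * k + 1)‼) * s ^ (p i + 2 * k + 2))
        (s * iteratedPrimitive f k s) :=
      ((ih s).mul_left s).congr_fun fun i ↦ by ring
    refine (hasSum_intervalIntegral_pow hmul t).congr_fun fun i ↦ ?_
    have := hfac (p i + 2 * k + 1)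
    rw [show p i + 2 * (k + 1) + 1 = p i + 2 * k + 1 + 2 by ring, Nat.doubleFactorial_add_two]
    push_cast
    field

variable {f : ℝ → ℝ}

theorem hasDerivAt_iteratedPrimitive_zero (hf : Continuous f) (t : ℝ) :
    HasDerivAt (iteratedPrimitive f 0) (f t) t :=
  (hf.integral_hasStrictDerivAt 0 t).hasDerivAt

theorem continuous_iteratedPrimitive (hf : Continuous f) (k : ℕ) :
    Continuous (iteratedPrimitive f k) := by
  induction k with
  | zero => exact intervalIntegral.continuous_primitive hf.intervalIntegrable 0
  | succ k ih =>
    exact intervalIntegral.continuous_primitive (continuous_id.mul ih).intervalIntegrable 0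

theorem hasDerivAt_iteratedPrimitive_succ (hf : Continuous f) (k : ℕ) (t : ℝ) :
    HasDerivAt (iteratedPrimitive f (k + 1)) (t * iteratedPrimitive f k t) t :=
  ((continuous_id.mul (continuous_iteratedPrimitive hf k)).integral_hasStrictDerivAt 0 t).hasDerivAt

theorem differentiable_iteratedPrimitive (hf : Continuous f) (k : ℕ) :
    Differentiable ℝ (iteratedPrimitive f k) := fun t ↦ by
  cases k with
  | zero => exact (hasDerivAt_iteratedPrimitive_zero hf t).differentiableAt
  | succ k => exact (hasDerivAt_iteratedPrimitive_succ hf k t).differentiableAt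

theorem iteratedPrimitive_apply_zero (f : ℝ → ℝ) (k : ℕ) : iteratedPrimitive f k 0 = 0 := by
  cases k <;> exact intervalIntegral.integral_same

-- The equality also holds at `t = 0`: there `Dop` divides by zero and both sides vanish.
theorem Dop_iteratedPrimitive_succ (hf : Continuous f) (k : ℕ) :
    Dop (iteratedPrimitive f (k + 1)) = iteratedPrimitive f k := by
  ext t
  rw [Dop, (hasDerivAt_iteratedPrimitive_succ hf k t).deriv]
  rcases eq_or_ne t 0 with rfl | ht
  · rw [div_zero, iteratedPrimitive_apply_zero]
  · rw [mul_div_cancel_left₀ _ ht]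

theorem iterate_Dop_iteratedPrimitive (hf : Continuous f) (k l : ℕ) :
    Dop^[k] (iteratedPrimitive f (l + k)) = iteratedPrimitive f l := by
  induction k with
  | zero => rfl
  | succ k ih =>
    rw [Function.iterate_succ_apply, ← add_assoc, Dop_iteratedPrimitive_succ hf, ih]

end IteratedPrimitive

theorem pow_mul_integral_sphere_comp_inner_eq_iteratedPrimitive {E : Type*} [NormedAddCommGroup E]
    [InnerProductSpace ℝ E] [FiniteDimensional ℝ E] [MeasurableSpace E] [BorelSpace E] {m : ℕ}
    (hE : Module.finrank ℝ E = 2 * (m + 1) + 1) {c : ℕ → ℝ} {f : ℝ → ℝ}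
    (hf : ∀ x, HasSum (fun j ↦ c j * x ^ (2 * j)) (f x)) (b : E) (t : ℝ) :
    t ^ (2 * m + 1) * ∫ ω : sphere (0 : E) 1, f ⟪t • b, (ω : E)⟫ ∂volume.toSphere =
      iteratedPrimitive (fun s ↦ 2 * (2 * π) ^ (m + 1) * f (s * ‖b‖)) m t := by
  have hscaled (s : ℝ) :
      HasSum (fun j ↦ 2 * (2 * π) ^ (m + 1) * c j * ‖b‖ ^ (2 * j) * s ^ (2 * j))
        (2 * (2 * π) ^ (m + 1) * f (s * ‖b‖)) :=
    ((hf (s * ‖b‖)).mul_left _).congr_fun fun j ↦ by ring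
  refine ((hasSum_integral_sphere_comp_inner hE hf (t • b)).mul_left _).unique ?_
  refine (hasSum_iteratedPrimitive hscaled m t).congr_fun fun j ↦ ?_
  rw [norm_smul, norm_eq_abs, mul_pow |t|, (even_two_mul j).pow_abs,
    show 2 * (j + (m + 1)) - 1 = 2 * j + 2 * m + 1 by lia]
  ring

theorem hasSum_cos_even_pow (x : ℝ) :
    HasSum (fun j : ℕ ↦ (-1) ^ j / (2 * j)! * x ^ (2 * j)) (cos x) :=
  (hasSum_cos x).congr_fun fun j ↦ by ring

theorem stmt0 (m : ℕ) (hm : 1 ≤ m) (a : Fin (2*m+1) → ℝ)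
    (G : ℝ → ℝ)
    (hG : ∀ t : ℝ, G t = t ^ (2*m-1) *
      ∫ ω : Metric.sphere (0 : EuclideanSpace ℝ (Fin (2*m+1))) 1,
        ∏ i, Real.cos (t * (ω : EuclideanSpace ℝ (Fin (2*m+1))) i * a i)
        ∂((volume : Measure (EuclideanSpace ℝ (Fin (2*m+1)))).toSphere)) :
    (∀ k < m, ∀ t ∈ Set.Ioi (0:ℝ), DifferentiableAt ℝ (Dop^[k] G) t) ∧
    ∀ t ∈ Set.Ioi (0:ℝ),
      Real.cos (t * Real.sqrt (∑ i, (a i)^2)) =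
        (1 / (2 * (2*π)^m)) * deriv (Dop^[m-1] G) t := by
  obtain ⟨n, rfl⟩ := Nat.exists_eq_add_of_le' hm
  let b : EuclideanSpace ℝ (Fin (2 * (n + 1) + 1)) := WithLp.toLp 2 a
  have hb : ‖b‖ = √(∑ i, a i ^ 2) := by simp only [EuclideanSpace.norm_eq, norm_eq_abs, sq_abs, b]
  let f (s : ℝ) : ℝ := 2 * (2 * π) ^ (n + 1) * cos (s * ‖b‖)
  have hf : Continuous f := by fun_prop
  have hGf : G = iteratedPrimitive f n := by
    ext t
    rw [hG, show 2 * (n + 1) - 1 = 2 * n + 1 from rfl,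
      ← pow_mul_integral_sphere_comp_inner_eq_iteratedPrimitive
        finrank_euclideanSpace_fin hasSum_cos_even_pow, ← integral_sphere_prod_cos]
    simp only [b, PiLp.smul_apply, smul_eq_mul, mul_right_comm t]
  have hiter (k : ℕ) (hk : k ≤ n) : Dop^[k] G = iteratedPrimitive f (n - k) := by
    rw [hGf, ← iterate_Dop_iteratedPrimitive hf k (n - k), Nat.sub_add_cancel hk]
  refine ⟨fun k hk t _ ↦ ?_, fun t _ ↦ ?_⟩
  · rw [hiter k (Nat.lt_succ_iff.1 hk)]
    exact differentiable_iteratedPrimitive hf (n - k) t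
  · rw [Nat.add_sub_cancel, hiter n le_rfl, Nat.sub_self,
      (hasDerivAt_iteratedPrimitive_zero hf t).deriv, ← hb]
    field
end

section
/- Let m ≥ 1, n = 2m, and let a₁,…,aₙ be real numbers. Define G : (0,∞) → ℝ by G(t) = t^{2m−1} ∫_{‖ω‖≤1, ω∈ℝ^{2m}} cos(tω₁a₁)·cos(tω₂a₂)⋯cos(tω_{2m}a_{2m}) · (1−‖ω‖²)^{−1/2} dω. Then G is (m times) differentiable and for every t > 0, cos(t·√(a₁²+⋯+a_{2m}²)) = (1/(2π)^m) · (D^{m−1}G)′(t). -/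
open MeasureTheory Real

/-!
A product `∏ᵢ cos θᵢ` is the average of `cos (∑ᵢ εᵢ θᵢ)` over all signs `ε`. For `θᵢ = cᵢ xᵢ` these
functions are `cos ⟪εc, x⟫` with `‖εc‖ = ‖c‖`, so they all have the same integral against a
rotation-invariant measure, and the product may be replaced by `cos ⟪c, x⟫`.

The projection to a line of the weight `(1 - ‖x‖²)₊ˢ` on a space of dimension `n + 1` is a multiple
of `(1 - u²)₊` to the power `s + n / 2`. For `s = -1/2` and even dimension `2m` this power is the
integer `m - 1`, and after rescaling `G t` is a multiple of `∫₀ᵗ cos (‖a‖ u) (t² - u²)ᵐ⁻¹ du`. Each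
application of `D` lowers the power by one, up to a factor, and a last derivative leaves
`cos (‖a‖ t)`.
-/

open Module Set

section Dop

theorem iterate_Dop_const_mul (c : ℝ) (f : ℝ → ℝ) (k : ℕ) :
    Dop^[k] (fun t => c * f t) = fun t => c * Dop^[k] f t := by
  have hcomm : Function.Commute Dop fun f t => c * f t := fun f => by
    ext t
    simp only [Dop, deriv_const_mul_field, mul_div_assoc]
  exact (hcomm.iterate_left k) f

theorem iterate_Dop_eqOn {U : Set ℝ} (hU : IsOpen U) {f g : ℝ → ℝ} (h : EqOn f g U) (k : ℕ) :
    EqOn (Dop^[k] f) (Dop^[k] g) U := by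
  induction k with
  | zero => exact h
  | succ k ih =>
    intro t ht
    rw [Function.iterate_succ_apply', Function.iterate_succ_apply', Dop, Dop,
      (ih.eventuallyEq_of_mem (hU.mem_nhds ht)).deriv_eq]

end Dop

section AbelIntegral

/-- The Abel-type (Erdélyi–Kober) integral `∫₀ᵗ g(u) (t² - u²)ᵏ du`. -/
noncomputable def abelIntegral (k : ℕ) (g : ℝ → ℝ) (t : ℝ) : ℝ :=
  ∫ u in (0 : ℝ)..t, g u * (t ^ 2 - u ^ 2) ^ k

variable {g : ℝ → ℝ}

theorem hasDerivAt_abelIntegral_zero (hg : Continuous g) (t : ℝ) :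
    HasDerivAt (abelIntegral 0 g) (g t) t := by
  have hzero : abelIntegral 0 g = fun t => ∫ u in (0 : ℝ)..t, g u := by
    ext t; simp [abelIntegral]
  exact hzero ▸ intervalIntegral.integral_hasDerivAt_right (hg.intervalIntegrable 0 t)
    (hg.stronglyMeasurableAtFilter _ _) hg.continuousAt

theorem abelIntegral_succ (hg : Continuous g) (k : ℕ) (t : ℝ) :
    abelIntegral (k + 1) g t =
      t ^ 2 * abelIntegral k g t - abelIntegral k (fun u => g u * u ^ 2) t := by
  rw [abelIntegral, abelIntegral, abelIntegral, ← intervalIntegral.integral_const_mul,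
    ← intervalIntegral.integral_sub]
  · congr 1; ext u; ring
  · exact Continuous.intervalIntegrable (by fun_prop) _ _
  · exact Continuous.intervalIntegrable (by fun_prop) _ _

theorem hasDerivAt_abelIntegral_succ (hg : Continuous g) (k : ℕ) (t : ℝ) :
    HasDerivAt (abelIntegral (k + 1) g) (2 * (k + 1) * t * abelIntegral k g t) t := by
  induction k generalizing g with
  | zero =>
    rw [funext (abelIntegral_succ hg 0)]
    refine (((hasDerivAt_pow 2 t).fun_mul (hasDerivAt_abelIntegral_zero hg t)).fun_sub
      (hasDerivAt_abelIntegral_zero (g := fun u => g u * u ^ 2) (by fun_prop) t)).congr_deriv ?_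
    push_cast
    ring
  | succ k ih =>
    rw [funext (abelIntegral_succ hg (k + 1))]
    refine (((hasDerivAt_pow 2 t).fun_mul (ih hg)).fun_sub
      (ih (g := fun u => g u * u ^ 2) (by fun_prop))).congr_deriv ?_
    push_cast
    linear_combination (-2 * (k + 1) * t) * abelIntegral_succ hg k t

theorem differentiable_abelIntegral (hg : Continuous g) :
    ∀ k, Differentiable ℝ (abelIntegral k g)
  | 0 => fun t => (hasDerivAt_abelIntegral_zero hg t).differentiableAt
  | k + 1 => fun t => (hasDerivAt_abelIntegral_succ hg k t).differentiableAt

theorem Dop_abelIntegral_succ (hg : Continuous g) (k : ℕ) :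
    EqOn (Dop (abelIntegral (k + 1) g)) (fun t => 2 * (k + 1) * abelIntegral k g t) {0}ᶜ := by
  intro t (ht : t ≠ 0)
  rw [Dop, (hasDerivAt_abelIntegral_succ hg k t).deriv]
  field_simp

theorem iterate_Dop_abelIntegral_add (hg : Continuous g) (k j : ℕ) :
    EqOn (Dop^[j] (abelIntegral (k + j) g))
      (fun t => 2 ^ j * ((k + 1).ascFactorial j) * abelIntegral k g t) {0}ᶜ := by
  induction j with
  | zero => intro t _; simp
  | succ j ih =>
    intro t ht
    rw [Function.iterate_succ_apply, ← add_assoc,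
      iterate_Dop_eqOn isOpen_compl_singleton (Dop_abelIntegral_succ hg (k + j)) j ht,
      iterate_Dop_const_mul]
    simp only [ih ht, Nat.ascFactorial_succ]
    push_cast
    ring

theorem differentiableAt_iterate_Dop_abelIntegral (hg : Continuous g) {j k : ℕ} (hjk : j ≤ k)
    {t : ℝ} (ht : t ≠ 0) : DifferentiableAt ℝ (Dop^[j] (abelIntegral k g)) t := by
  obtain ⟨i, rfl⟩ := Nat.exists_eq_add_of_le' hjk
  exact ((differentiable_abelIntegral hg i t).const_mul _).congr_of_eventuallyEq
    ((iterate_Dop_abelIntegral_add hg i j).eventuallyEq_of_mem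
      (isOpen_compl_singleton.mem_nhds ht))

theorem deriv_iterate_Dop_abelIntegral (hg : Continuous g) (k : ℕ) {t : ℝ} (ht : t ≠ 0) :
    deriv (Dop^[k] (abelIntegral k g)) t = 2 ^ k * k.factorial * g t := by
  have h := iterate_Dop_abelIntegral_add hg 0 k
  rw [zero_add, zero_add, Nat.one_ascFactorial] at h
  rw [(h.eventuallyEq_of_mem (isOpen_compl_singleton.mem_nhds ht)).deriv_eq,
    ((hasDerivAt_abelIntegral_zero hg t).const_mul _).deriv]

theorem pow_mul_abelIntegral_comp_mul_left_one (g : ℝ → ℝ) (k : ℕ) (t : ℝ) :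
    t ^ (2 * k + 1) * abelIntegral k (fun u => g (t * u)) 1 = abelIntegral k g t := by
  have hsubst := intervalIntegral.smul_integral_comp_mul_left (a := 0) (b := 1)
    (fun u => g u * (t ^ 2 - u ^ 2) ^ k) t
  rw [mul_zero, mul_one, smul_eq_mul] at hsubst
  rw [abelIntegral, abelIntegral, ← hsubst, pow_succ', mul_assoc,
    ← intervalIntegral.integral_const_mul]
  congr 2 with u
  rw [mul_pow, ← mul_one_sub, mul_pow, one_pow]
  ring

end AbelIntegral

section RotationInvariant

theorem prod_cos_eq_sum_cos {ι : Type*} [Fintype ι] [DecidableEq ι] (θ : ι → ℝ) :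
    ∏ i, cos (θ i) = (2 ^ Fintype.card ι)⁻¹ * ∑ ε : ι → ℤˣ, cos (∑ i, ε i * θ i) := by
  have hcos (x : ℝ) : (cos x : ℂ) = 2⁻¹ * ∑ ε : ℤˣ, Complex.exp ((ε * x : ℝ) * Complex.I) := by
    simp [Complex.cos, UnitsInt.univ, div_eq_inv_mul]
  have hprod : ((∏ i, cos (θ i) : ℝ) : ℂ) = ((2 ^ Fintype.card ι)⁻¹ : ℝ) *
      ∑ ε : ι → ℤˣ, Complex.exp ((∑ i, ε i * θ i : ℝ) * Complex.I) := by
    rw [Complex.ofReal_prod, Finset.prod_congr rfl fun i _ => hcos (θ i),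
      Finset.prod_mul_distrib, Finset.prod_univ_sum, Fintype.piFinset_univ]
    simp [← Complex.exp_sum, Finset.sum_mul]
  have hre := congrArg Complex.re hprod
  rwa [Complex.ofReal_re, Complex.re_ofReal_mul, Complex.re_sum,
    Finset.sum_congr rfl fun ε _ => Complex.exp_ofReal_mul_I_re _] at hre

theorem integral_comp_inner_eq_of_norm_eq {E : Type*} [NormedAddCommGroup E]
    [InnerProductSpace ℝ E] [MeasurableSpace E] [BorelSpace E] {μ : Measure E}
    (hμ : ∀ L : E ≃ₗᵢ[ℝ] E, MeasurePreserving L μ μ) {b c : E} (hbc : ‖b‖ = ‖c‖) (f : ℝ → ℝ) :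
    ∫ x, f (inner ℝ b x) ∂μ = ∫ x, f (inner ℝ c x) ∂μ := by
  let L := (ℝ ∙ (c - b))ᗮ.reflection
  have hL : L c = b := Submodule.reflection_sub hbc.symm
  rw [← (hμ L).integral_comp' (f := L.toMeasurableEquiv)]
  simp only [LinearIsometryEquiv.coe_toMeasurableEquiv]
  rw [← hL]
  simp only [L.inner_map_map]

theorem integral_prod_cos_eq_integral_cos_inner {ι : Type*} [Fintype ι]
    {μ : Measure (EuclideanSpace ℝ ι)} [IsFiniteMeasure μ]
    (hμ : ∀ L : EuclideanSpace ℝ ι ≃ₗᵢ[ℝ] EuclideanSpace ℝ ι, MeasurePreserving L μ μ)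
    (c : EuclideanSpace ℝ ι) :
    ∫ x, ∏ i, cos (c i * x i) ∂μ = ∫ x, cos (inner ℝ c x) ∂μ := by
  classical
  let flip (ε : ι → ℤˣ) : EuclideanSpace ℝ ι := WithLp.toLp 2 fun i => ε i * c i
  have hflip_norm (ε : ι → ℤˣ) : ‖flip ε‖ = ‖c‖ := by
    have hsq (i : ι) : ((ε i : ℤ) : ℝ) ^ 2 = 1 := by
      rcases Int.units_eq_one_or (ε i) with h | h <;> simp [h]
    simp [flip, EuclideanSpace.norm_eq, mul_pow, hsq]
  have hflip_inner (ε : ι → ℤˣ) (x : EuclideanSpace ℝ ι) :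
      ∑ i, ε i * (c i * x i) = inner ℝ (flip ε) x := by
    simp [flip, PiLp.inner_apply, mul_assoc, mul_comm (x _)]
  have hint (b : EuclideanSpace ℝ ι) : Integrable (fun x => cos (inner ℝ b x)) μ :=
    .of_bound (by fun_prop) 1 (.of_forall fun x => abs_cos_le_one _)
  simp only [prod_cos_eq_sum_cos, hflip_inner]
  rw [integral_const_mul, integral_finsetSum _ fun ε _ => hint (flip ε)]
  simp only [integral_comp_inner_eq_of_norm_eq hμ (hflip_norm _) cos]
  simp

end RotationInvariant

section TruncRpow

/-- The truncated power `u₊ˢ`. It vanishes at every `u ≤ 0`, whatever `Real.rpow` gives there. -/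
noncomputable def truncRpow (s u : ℝ) : ℝ := if 0 < u then u ^ s else 0

variable {s u : ℝ}

theorem truncRpow_of_pos (hu : 0 < u) : truncRpow s u = u ^ s := if_pos hu

theorem truncRpow_of_nonpos (hu : u ≤ 0) : truncRpow s u = 0 := if_neg hu.not_gt

theorem truncRpow_of_nonneg (hs : s ≠ 0) (hu : 0 ≤ u) : truncRpow s u = u ^ s := by
  rcases hu.eq_or_lt with rfl | hu
  · rw [truncRpow_of_nonpos le_rfl, zero_rpow hs]
  · exact truncRpow_of_pos hu

theorem truncRpow_nonneg (s u : ℝ) : 0 ≤ truncRpow s u := by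
  rw [truncRpow]
  split_ifs with hu
  · exact rpow_nonneg hu.le s
  · exact le_rfl

theorem truncRpow_mul {a : ℝ} (ha : 0 < a) (s u : ℝ) :
    truncRpow s (a * u) = a ^ s * truncRpow s u := by
  simp only [truncRpow, mul_pos_iff_of_pos_left ha]
  split_ifs with hu
  · exact mul_rpow ha.le hu.le
  · rw [mul_zero]

@[fun_prop]
theorem measurable_truncRpow (s : ℝ) : Measurable (truncRpow s) :=
  Measurable.ite measurableSet_Ioi (by fun_prop) measurable_const

theorem lintegral_exp_neg_mul_truncRpow (hs : -1 < s) (c : ℝ) :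
    ∫⁻ u, ENNReal.ofReal (exp (-u) * truncRpow s (u - c)) =
      ENNReal.ofReal (exp (-c) * Gamma (s + 1)) := by
  have hs' : 0 < s + 1 := by linarith
  have hint : IntegrableOn (fun u => exp (-u) * u ^ s) (Ioi 0) := by
    simpa using GammaIntegral_convergent hs'
  have hind : (fun u => ENNReal.ofReal (exp (-u) * truncRpow s u)) =
      (Ioi 0).indicator fun u => ENNReal.ofReal (exp (-u) * u ^ s) := by
    ext u
    by_cases hu : 0 < u <;> simp [truncRpow, hu]
  have hGamma : ∫⁻ u, ENNReal.ofReal (exp (-u) * truncRpow s u) =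
      ENNReal.ofReal (Gamma (s + 1)) := by
    rw [hind, lintegral_indicator measurableSet_Ioi, Gamma_eq_integral hs', add_sub_cancel_right,
      ofReal_integral_eq_lintegral_ofReal hint]
    exact ae_restrict_of_forall_mem measurableSet_Ioi fun u (hu : 0 < u) => by positivity
  rw [← lintegral_add_right_eq_self _ c]
  simp only [add_sub_cancel_right, neg_add, exp_add, mul_right_comm _ (exp (-c)),
    ENNReal.ofReal_mul' (exp_pos (-c)).le]
  rw [lintegral_mul_const _ (by fun_prop), hGamma, mul_comm, ENNReal.ofReal_mul (exp_pos _).le]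

end TruncRpow

section BallMeasure

variable {E : Type*} [NormedAddCommGroup E] [InnerProductSpace ℝ E] [FiniteDimensional ℝ E]
  [MeasurableSpace E] [BorelSpace E]
  {F : Type*} [NormedAddCommGroup F] [InnerProductSpace ℝ F] [FiniteDimensional ℝ F]
  [MeasurableSpace F] [BorelSpace F]

variable (E) in
/-- The measure `(1 - ‖x‖²)ˢ dx` on the open unit ball of a Euclidean space. For `s = -1/2` it is
the image of the surface measure of a unit hemisphere under the projection to `E`. -/
noncomputable def ballMeasure (s : ℝ) : Measure E :=
  volume.withDensity fun x => ENNReal.ofReal (truncRpow s (1 - ‖x‖ ^ 2))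

theorem ballMeasure_apply (s : ℝ) {A : Set E} (hA : MeasurableSet A) :
    ballMeasure E s A = ∫⁻ x in A, ENNReal.ofReal (truncRpow s (1 - ‖x‖ ^ 2)) :=
  withDensity_apply _ hA

theorem measurePreserving_ballMeasure (L : E ≃ₗᵢ[ℝ] F) (s : ℝ) :
    MeasurePreserving L (ballMeasure E s) (ballMeasure F s) := by
  refine ⟨L.continuous.measurable, Measure.ext fun A hA => ?_⟩
  have hL := L.measurePreserving
  rw [Measure.map_apply hL.measurable hA, ballMeasure_apply _ hA,
    ballMeasure_apply _ (hL.measurable hA), ← hL.setLIntegral_comp_preimage hA (by fun_prop)]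
  simp only [L.norm_map]

theorem integral_ballMeasure (s : ℝ) (f : E → ℝ) :
    ∫ x, f x ∂ballMeasure E s = ∫ x, truncRpow s (1 - ‖x‖ ^ 2) * f x := by
  rw [ballMeasure, integral_withDensity_eq_integral_toReal_smul (by fun_prop)
    (.of_forall fun _ => ENNReal.ofReal_lt_top)]
  simp only [ENNReal.toReal_ofReal (truncRpow_nonneg _ _), smul_eq_mul]

theorem lintegral_truncRpow_sub_norm_sq (s a : ℝ) :
    ∫⁻ x : E, ENNReal.ofReal (truncRpow s (a - ‖x‖ ^ 2)) =
      ENNReal.ofReal (truncRpow (s + finrank ℝ E / 2) a) * ballMeasure E s univ := by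
  rcases le_or_gt a 0 with ha | ha
  · have hzero (x : E) : truncRpow s (a - ‖x‖ ^ 2) = 0 :=
      truncRpow_of_nonpos (by nlinarith [sq_nonneg ‖x‖])
    simp [hzero, truncRpow_of_nonpos ha]
  · have hR : 0 < √a := sqrt_pos.2 ha
    have hscale : ∫⁻ x : E, ENNReal.ofReal (truncRpow s (a - ‖√a • x‖ ^ 2)) =
        ENNReal.ofReal (a ^ s) * ballMeasure E s univ := by
      rw [ballMeasure_apply _ .univ, setLIntegral_univ, ← lintegral_const_mul _ (by fun_prop)]
      congr 1 with x
      rw [norm_smul, norm_of_nonneg hR.le, mul_pow, sq_sqrt ha.le,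
        ← ENNReal.ofReal_mul (by positivity), ← truncRpow_mul ha]
      ring_nf
    rw [← lintegral_map (f := fun x : E => ENNReal.ofReal (truncRpow s (a - ‖x‖ ^ 2)))
      (by fun_prop) (by fun_prop), Measure.map_addHaar_smul _ hR.ne',
      lintegral_smul_measure] at hscale
    have hcoef : truncRpow (s + finrank ℝ E / 2) a = √a ^ finrank ℝ E * a ^ s := by
      rw [truncRpow_of_pos ha, rpow_add ha, rpow_div_two_eq_sqrt _ ha.le, rpow_natCast, mul_comm]
    rw [hcoef, ENNReal.ofReal_mul (by positivity), mul_assoc, ← hscale, smul_eq_mul, ← mul_assoc,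
      ← ENNReal.ofReal_mul (by positivity), abs_of_pos (by positivity),
      mul_inv_cancel₀ (by positivity), ENNReal.ofReal_one, one_mul]

theorem map_fst_ballMeasure (s : ℝ) :
    (ballMeasure (WithLp 2 (E × F)) s).map WithLp.fst =
      ballMeasure F s univ • ballMeasure E (s + finrank ℝ F / 2) := by
  have hfst : Measurable (WithLp.fst : WithLp 2 (E × F) → E) := by fun_prop
  ext A hA
  have hpre : WithLp.toLp 2 ⁻¹' (WithLp.fst ⁻¹' A) = A ×ˢ (univ : Set F) := by ext; simp
  rw [Measure.map_apply hfst hA, ballMeasure_apply _ (hfst hA),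
    ← (WithLp.volume_preserving_toLp E F).setLIntegral_comp_preimage (hfst hA) (by fun_prop),
    hpre, Measure.volume_eq_prod, setLIntegral_prod _ (by fun_prop), Measure.smul_apply,
    ballMeasure_apply _ hA, smul_eq_mul, ← lintegral_const_mul _ (by fun_prop)]
  simp only [WithLp.prod_norm_sq_eq_of_L2, ← sub_sub, Measure.restrict_univ,
    WithLp.toLp_fst, WithLp.toLp_snd, lintegral_truncRpow_sub_norm_sq, mul_comm]

theorem ballMeasure_univ {s : ℝ} (hs : -1 < s) :
    ballMeasure E s univ = ENNReal.ofReal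
      (π ^ (finrank ℝ E / 2 : ℝ) * Gamma (s + 1) / Gamma (s + finrank ℝ E / 2 + 1)) := by
  have hs' : -1 < s + finrank ℝ E / 2 :=
    hs.trans_le (le_add_of_nonneg_right (by positivity))
  have hGamma : 0 < Gamma (s + finrank ℝ E / 2 + 1) := Gamma_pos_of_pos (by linarith)
  -- Integrate `exp (-u) (u - ‖x‖²)₊ˢ` over `u` and `x` in both orders: a Gaussian on one side.
  have hgauss : ∫⁻ x : E, ENNReal.ofReal (exp (-‖x‖ ^ 2)) =
      ENNReal.ofReal (π ^ (finrank ℝ E / 2 : ℝ)) := by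
    have hval : ∫ x : E, exp (-‖x‖ ^ 2) = π ^ (finrank ℝ E / 2 : ℝ) := by
      simpa using GaussianFourier.integral_rexp_neg_mul_sq_norm (V := E) one_pos
    rw [← hval, ofReal_integral_eq_lintegral_ofReal _ (.of_forall fun _ => (exp_pos _).le)]
    exact .of_integral_ne_zero (by rw [hval]; positivity)
  have hinner (u : ℝ) : ∫⁻ x : E, ENNReal.ofReal (exp (-u) * truncRpow s (u - ‖x‖ ^ 2)) =
      ENNReal.ofReal (exp (-u) * truncRpow (s + finrank ℝ E / 2) (u - 0)) *
        ballMeasure E s univ := by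
    simp only [ENNReal.ofReal_mul (exp_pos _).le]
    rw [lintegral_const_mul _ (by fun_prop), lintegral_truncRpow_sub_norm_sq, sub_zero, mul_assoc]
  have hswap : ∫⁻ u, ∫⁻ x : E, ENNReal.ofReal (exp (-u) * truncRpow s (u - ‖x‖ ^ 2)) =
      ∫⁻ x : E, ∫⁻ u, ENNReal.ofReal (exp (-u) * truncRpow s (u - ‖x‖ ^ 2)) :=
    lintegral_lintegral_swap (by fun_prop)
  simp_rw [hinner, lintegral_exp_neg_mul_truncRpow hs, ENNReal.ofReal_mul (exp_pos _).le] at hswap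
  rw [lintegral_mul_const _ (by fun_prop), lintegral_mul_const _ (by fun_prop), hgauss] at hswap
  simp_rw [← ENNReal.ofReal_mul (exp_pos _).le] at hswap
  rw [lintegral_exp_neg_mul_truncRpow hs', neg_zero, exp_zero, one_mul] at hswap
  rw [ENNReal.ofReal_div_of_pos hGamma, ENNReal.eq_div_iff (by simpa using hGamma) (by simp), hswap,
    ENNReal.ofReal_mul (by positivity)]

theorem isFiniteMeasure_ballMeasure {s : ℝ} (hs : -1 < s) :
    IsFiniteMeasure (ballMeasure E s) :=
  ⟨by simp [ballMeasure_univ hs]⟩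

theorem setIntegral_closedBall_mul_rpow {s : ℝ} (hs : s ≠ 0) (f : E → ℝ) :
    ∫ x in Metric.closedBall 0 1, f x * (1 - ‖x‖ ^ 2) ^ s = ∫ x, f x ∂ballMeasure E s := by
  have hout (x : E) (hx : x ∉ Metric.closedBall 0 1) : truncRpow s (1 - ‖x‖ ^ 2) * f x = 0 := by
    rw [mem_closedBall_zero_iff, not_le] at hx
    rw [truncRpow_of_nonpos (by nlinarith), zero_mul]
  rw [integral_ballMeasure, ← setIntegral_eq_integral_of_forall_compl_eq_zero hout]
  refine setIntegral_congr_fun measurableSet_closedBall fun x hx => ?_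
  have hx : ‖x‖ ≤ 1 := mem_closedBall_zero_iff.1 hx
  have hnonneg : 0 ≤ 1 - ‖x‖ ^ 2 := sub_nonneg.2 (pow_le_one₀ (norm_nonneg x) hx)
  simp only [truncRpow_of_nonneg hs hnonneg, mul_comm]

theorem integral_comp_inner_ballMeasure {n : ℕ} (hE : finrank ℝ E = n + 1) {s : ℝ} (hs : -1 < s)
    {f : ℝ → ℝ} (hf : Measurable f) (b : E) :
    ∫ x, f (inner ℝ b x) ∂ballMeasure E s =
      π ^ (n / 2 : ℝ) * Gamma (s + 1) / Gamma (s + n / 2 + 1) *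
        ∫ u, f (‖b‖ * u) ∂ballMeasure ℝ (s + n / 2) := by
  let F := EuclideanSpace ℝ (Fin n)
  have hF : finrank ℝ F = n := finrank_euclideanSpace_fin
  have hfinrank : finrank ℝ (WithLp 2 (ℝ × F)) = finrank ℝ E := by
    rw [(WithLp.linearEquiv 2 ℝ (ℝ × F)).finrank_eq, finrank_prod, finrank_self, hF, hE, add_comm]
  let L : WithLp 2 (ℝ × F) ≃ₗᵢ[ℝ] E :=
    (stdOrthonormalBasis ℝ _).equiv (stdOrthonormalBasis ℝ E) (finCongr hfinrank)
  let e : WithLp 2 (ℝ × F) := WithLp.toLp 2 (‖b‖, 0)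
  have he : ‖b‖ = ‖L e‖ := by simp [e, L.norm_map]
  have hinner (y : WithLp 2 (ℝ × F)) : inner ℝ (L e) (L y) = ‖b‖ * y.fst := by
    simp [e, WithLp.prod_inner_apply, L.inner_map_map, mul_comm]
  calc ∫ x, f (inner ℝ b x) ∂ballMeasure E s
      = ∫ x, f (inner ℝ (L e) x) ∂ballMeasure E s :=
        integral_comp_inner_eq_of_norm_eq (fun L => measurePreserving_ballMeasure L s) he f
    _ = ∫ y, f (inner ℝ (L e) (L y)) ∂ballMeasure (WithLp 2 (ℝ × F)) s :=
        ((measurePreserving_ballMeasure L s).integral_comp' (f := L.toMeasurableEquiv) _).symm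
    _ = ∫ y, f (‖b‖ * y.fst) ∂ballMeasure (WithLp 2 (ℝ × F)) s := by simp only [hinner]
    _ = ∫ u, f (‖b‖ * u) ∂(ballMeasure (WithLp 2 (ℝ × F)) s).map WithLp.fst :=
        (integral_map (φ := WithLp.fst) (f := fun u => f (‖b‖ * u)) (by fun_prop)
          (hf.comp (measurable_const_mul _)).aestronglyMeasurable).symm
    _ = _ := by
        have hΓs : 0 < Gamma (s + 1) := Gamma_pos_of_pos (by linarith)
        have hΓsn : 0 < Gamma (s + n / 2 + 1) := Gamma_pos_of_pos (by
          linarith [show (0 : ℝ) ≤ n / 2 by positivity])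
        rw [map_fst_ballMeasure, integral_smul_measure, ballMeasure_univ hs, hF, smul_eq_mul,
          ENNReal.toReal_ofReal (by positivity)]

theorem integral_ballMeasure_real_natCast (k : ℕ) {g : ℝ → ℝ} (hg : Continuous g)
    (heven : g.Even) : ∫ u, g u ∂ballMeasure ℝ k = 2 * abelIntegral k g 1 := by
  let h (u : ℝ) := g u * (1 ^ 2 - u ^ 2) ^ k
  have hint (b c : ℝ) : IntervalIntegrable h volume b c :=
    Continuous.intervalIntegrable (by fun_prop) b c
  have hind : (fun u => truncRpow k (1 - ‖u‖ ^ 2) * g u) = (Ioo (-1) 1).indicator h := by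
    ext u
    by_cases hu : u ∈ Ioo (-1) 1
    · have hpos : 0 < 1 - ‖u‖ ^ 2 := by
        rw [norm_eq_abs, sq_abs, sub_pos, sq_lt_one_iff_abs_lt_one, abs_lt]; exact hu
      rw [indicator_of_mem hu, truncRpow_of_pos hpos, rpow_natCast, norm_eq_abs, sq_abs, mul_comm]
      simp only [h, one_pow]
    · have hnonpos : 1 - ‖u‖ ^ 2 ≤ 0 := by
        rw [norm_eq_abs, sq_abs, sub_nonpos, one_le_sq_iff_one_le_abs, ← not_lt, abs_lt]; exact hu
      rw [indicator_of_notMem hu, truncRpow_of_nonpos hnonpos, zero_mul]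
  have hneg : ∫ u in (-1)..0, h u = ∫ u in (0 : ℝ)..1, h u := by
    rw [← neg_zero, ← intervalIntegral.integral_comp_neg]
    simp only [h, heven _, neg_sq, neg_zero]
  rw [integral_ballMeasure, hind, integral_indicator measurableSet_Ioo,
    ← integral_Ioc_eq_integral_Ioo, ← intervalIntegral.integral_of_le (by norm_num),
    ← intervalIntegral.integral_add_adjacent_intervals (hint _ 0) (hint _ _), hneg, two_mul]
  rfl

theorem pow_mul_integral_comp_inner_ballMeasure {n k : ℕ} (hE : finrank ℝ E = n + 1) {s : ℝ}
    (hs : -1 < s) (hk : s + n / 2 = k) {g : ℝ → ℝ} (hg : Continuous g) (heven : g.Even) (b : E)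
    (t : ℝ) :
    t ^ (2 * k + 1) * ∫ x, g (t * inner ℝ b x) ∂ballMeasure E s =
      2 * π ^ (n / 2 : ℝ) * Gamma (s + 1) / k.factorial *
        abelIntegral k (fun u => g (‖b‖ * u)) t := by
  have hline : ∫ u, g (t * (‖b‖ * u)) ∂ballMeasure ℝ k =
      2 * abelIntegral k (fun u => g (‖b‖ * (t * u))) 1 := by
    simp only [mul_left_comm t]
    exact integral_ballMeasure_real_natCast k (by fun_prop) fun u => by simp only [mul_neg, heven _]
  rw [integral_comp_inner_ballMeasure hE hs (f := fun u => g (t * u)) (by fun_prop) b, hk, hline,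
    Gamma_nat_eq_factorial, ← pow_mul_abelIntegral_comp_mul_left_one (fun u => g (‖b‖ * u))]
  ring

end BallMeasure

theorem pow_mul_setIntegral_prod_cos_mul_rpow (k : ℕ) {ι : Type*} [Fintype ι]
    (hι : Fintype.card ι = 2 * k + 2) (a : ι → ℝ) (t : ℝ) :
    t ^ (2 * k + 1) * ∫ ω in Metric.closedBall (0 : EuclideanSpace ℝ ι) 1,
        (∏ i, cos (t * ω i * a i)) * (1 - ‖ω‖ ^ 2) ^ (-(1 : ℝ) / 2) =
      2 * π ^ (k + 1) / k.factorial *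
        abelIntegral k (fun u => cos (√(∑ i, a i ^ 2) * u)) t := by
  let b : EuclideanSpace ℝ ι := WithLp.toLp 2 a
  have hb : ‖b‖ = √(∑ i, a i ^ 2) := by simp [b, EuclideanSpace.norm_eq]
  have hcos (ω : EuclideanSpace ℝ ι) (i : ι) : cos (t * ω i * a i) = cos ((t • b) i * ω i) := by
    simp [b, mul_right_comm]
  have : IsFiniteMeasure (ballMeasure (EuclideanSpace ℝ ι) (-1 / 2)) :=
    isFiniteMeasure_ballMeasure (by norm_num)
  have hexp : (-1 / 2 + (2 * k + 1 : ℕ) / 2 : ℝ) = k := by push_cast; ring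
  have hconst : π ^ ((2 * k + 1 : ℕ) / 2 : ℝ) * Gamma (-1 / 2 + 1) = π ^ (k + 1) := by
    rw [show (-1 / 2 + 1 : ℝ) = 1 / 2 by norm_num, Gamma_one_half_eq, sqrt_eq_rpow,
      ← rpow_add pi_pos, ← rpow_natCast]
    congr 1
    push_cast
    ring
  simp only [hcos]
  rw [setIntegral_closedBall_mul_rpow (by norm_num), integral_prod_cos_eq_integral_cos_inner
    (fun L => measurePreserving_ballMeasure L _)]
  simp only [real_inner_smul_left]
  rw [pow_mul_integral_comp_inner_ballMeasure (by simp [hι]) (by norm_num) hexp continuous_cos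
    cos_neg b t, mul_assoc 2, hconst, hb]

theorem stmt1_general (m : ℕ) (hm : 1 ≤ m) (a : Fin (2 * m) → ℝ) {U : Set ℝ} (hU : IsOpen U)
    (h0 : (0 : ℝ) ∉ U) (G : ℝ → ℝ)
    (hG : ∀ t ∈ U, G t = t ^ (2 * m - 1) *
      ∫ ω in Metric.closedBall (0 : EuclideanSpace ℝ (Fin (2 * m))) 1,
        (∏ i, cos (t * ω i * a i)) * (1 - ‖ω‖ ^ 2) ^ (-(1 : ℝ) / 2)) :
    (∀ k < m, ∀ t ∈ U, DifferentiableAt ℝ (Dop^[k] G) t) ∧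
    ∀ t ∈ U, cos (t * √(∑ i, a i ^ 2)) = (1 / (2 * π) ^ m) * deriv (Dop^[m - 1] G) t := by
  obtain ⟨k, rfl⟩ := Nat.exists_eq_add_of_le' hm
  let g (u : ℝ) := cos (√(∑ i, a i ^ 2) * u)
  have hg : Continuous g := by fun_prop
  have hG' : EqOn G (fun t => 2 * π ^ (k + 1) / k.factorial * abelIntegral k g t) U :=
    fun t ht => (hG t ht).trans
      (pow_mul_setIntegral_prod_cos_mul_rpow k (by simp [mul_add]) a t)
  have hDG (j : ℕ) {t : ℝ} (ht : t ∈ U) : Dop^[j] G =ᶠ[nhds t] fun t =>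
      2 * π ^ (k + 1) / k.factorial * Dop^[j] (abelIntegral k g) t :=
    iterate_Dop_const_mul _ (abelIntegral k g) j ▸
      (iterate_Dop_eqOn hU hG' j).eventuallyEq_of_mem (hU.mem_nhds ht)
  refine ⟨fun j hj t ht => ?_, fun t ht => ?_⟩ <;> have ht0 : t ≠ 0 := ne_of_mem_of_not_mem ht h0
  · exact ((differentiableAt_iterate_Dop_abelIntegral hg (Nat.le_of_lt_succ hj) ht0).const_mul
      _).congr_of_eventuallyEq (hDG j ht)
  · rw [add_tsub_cancel_right, (hDG k ht).deriv_eq, deriv_const_mul_field,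
      deriv_iterate_Dop_abelIntegral hg k ht0, mul_comm t]
    simp only [g]
    field_simp
    ring

theorem stmt1 (m : ℕ) (hm : 1 ≤ m) (a : Fin (2*m) → ℝ)
    (G : ℝ → ℝ)
    (hG : ∀ t : ℝ, G t = t ^ (2*m-1) *
      ∫ ω in Metric.closedBall (0 : EuclideanSpace ℝ (Fin (2*m))) 1,
        (∏ i, Real.cos (t * ω i * a i)) * (1 - ‖ω‖^2) ^ (-(1:ℝ)/2)) :
    (∀ k < m, ∀ t ∈ Set.Ioi (0:ℝ), DifferentiableAt ℝ (Dop^[k] G) t) ∧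
    ∀ t ∈ Set.Ioi (0:ℝ),
      Real.cos (t * Real.sqrt (∑ i, (a i)^2)) =
        (1 / (2*π)^m) * deriv (Dop^[m-1] G) t :=
  stmt1_general m hm a isOpen_Ioi self_notMem_Ioi G fun t _ => hG t
end

section
/- Let m ≥ 1 and a = (a₁,…,a_{2m}) ∈ ℝ^{2m}. Then for every t ∈ ℝ, t^{2m−1} ∫_{‖ω‖≤1, ω∈ℝ^{2m}} cos(ω₁a₁t)·cos(ω₂a₂t)⋯cos(ω_{2m}a_{2m}t) · (1−‖ω‖²)^{−1/2} dω = Σ_{α∈ℕ^{2m}} (−1)^{|α|} (2π)^m · a^{2α} · t^{2|α|+2m−1} / (2^{|α|} · α! · (2|α|+2m−1)!!), where the series converges absolutely. -/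
open MeasureTheory Real

/-!
Expanding every cosine in its power series reduces the integral to the moments `∏ ω i ^ (2 * α i)`
of the weight `(1 - ‖ω‖²) ^ (c - 1)` on the ball. Such a moment is a homogeneous function times a
radial one, so in polar coordinates it splits into a sphere integral and a one-dimensional Beta
integral. The sphere integral does not depend on the radial factor, and taking the Gaussian
`exp (-‖ω‖²)`, whose moments factor over the coordinates, evaluates it. For `c = 1 / 2` in even
dimension the remaining Gamma values are at half-integers, which gives the double factorials.
-/

section InfiniteSum

variable {ι : Type*} [Fintype ι] {κ : ι → Type*} {R : Type*} [NormedCommRing R]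
  [NormOneClass R] {f : ∀ i, κ i → R}

theorem summable_norm_prod_apply (hf : ∀ i, Summable fun k => ‖f i k‖) :
    Summable fun α : ∀ i, κ i => ‖∏ i, f i (α i)‖ := by
  classical
  refine summable_of_sum_le (c := ∏ i, ∑' k, ‖f i k‖) (fun _ => norm_nonneg _) fun u => ?_
  have hu : u ⊆ Fintype.piFinset fun i => u.image (· i) := fun α hα =>
    Fintype.mem_piFinset.2 fun i => Finset.mem_image_of_mem _ hα
  calc
    ∑ α ∈ u, ‖∏ i, f i (α i)‖ ≤ ∑ α ∈ u, ∏ i, ‖f i (α i)‖ := by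
      gcongr
      exact Finset.norm_prod_le _ _
    _ ≤ ∑ α ∈ Fintype.piFinset fun i => u.image (· i), ∏ i, ‖f i (α i)‖ := by
      gcongr
    _ = ∏ i, ∑ k ∈ u.image (· i), ‖f i k‖ := (Finset.prod_univ_sum _ fun i k => ‖f i k‖).symm
    _ ≤ ∏ i, ∑' k, ‖f i k‖ := by
      gcongr with i
      exact (hf i).sum_le_tsum _ fun _ _ => norm_nonneg _

theorem tendsto_piFinset_atTop [DecidableEq ι] :
    Filter.Tendsto (Fintype.piFinset : (∀ i, Finset (κ i)) → Finset (∀ i, κ i)) .atTop .atTop := by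
  classical
  refine Monotone.tendsto_atTop_atTop (fun s t h => Fintype.piFinset_subset _ _ h) fun u =>
    ⟨fun i => u.image (· i), fun α hα => ?_⟩
  exact Fintype.mem_piFinset.2 fun i => Finset.mem_image_of_mem _ hα

theorem hasSum_prod_apply [CompleteSpace R] {s : ι → R} (hf : ∀ i, HasSum (f i) (s i))
    (hf' : ∀ i, Summable fun k => ‖f i k‖) :
    HasSum (fun α : ∀ i, κ i => ∏ i, f i (α i)) (∏ i, s i) := by
  classical
  have hsum := (summable_norm_prod_apply hf').of_norm
  have hboxes : Filter.Tendsto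
      (fun t : ∀ i, Finset (κ i) => ∑ α ∈ Fintype.piFinset t, ∏ i, f i (α i)) .atTop
      (nhds (∏ i, s i)) := by
    simp only [← Finset.prod_univ_sum]
    refine tendsto_finsetProd _ fun i _ => (hf i).comp ?_
    exact (Function.monotone_eval i).tendsto_atTop_atTop fun u =>
      ⟨Function.update (fun _ => ∅) i u, by simp⟩
  rw [← tendsto_nhds_unique (hsum.hasSum.comp tendsto_piFinset_atTop) hboxes]
  exact hsum.hasSum

end InfiniteSum

section Radial

variable {E : Type*} [NormedAddCommGroup E] [NormedSpace ℝ E] [Nontrivial E]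
  [FiniteDimensional ℝ E] [MeasurableSpace E] [BorelSpace E]

theorem integral_mul_fun_norm_of_homogeneous (μ : Measure E) [μ.IsAddHaarMeasure] {h : E → ℝ}
    {d : ℝ} (hh : ∀ (r : ℝ) (x : E), 0 < r → h (r • x) = r ^ d * h x) (φ : ℝ → ℝ) :
    ∫ x, h x * φ ‖x‖ ∂μ =
      (∫ y, h y ∂μ.toSphere) *
        ∫ r in Set.Ioi (0 : ℝ), r ^ (d + Module.finrank ℝ E - 1) * φ r := by
  have hn : 0 < Module.finrank ℝ E := Module.finrank_pos
  calc
    ∫ x, h x * φ ‖x‖ ∂μ = ∫ x : ({0}ᶜ : Set E), h x * φ ‖(x : E)‖ ∂μ.comap (↑) := by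
      rw [integral_subtype_comap (measurableSet_singleton _).compl fun x => h x * φ ‖x‖,
        restrict_compl_singleton]
    _ = ∫ z : Metric.sphere (0 : E) 1 × Set.Ioi (0 : ℝ), h z.1 * ((z.2 : ℝ) ^ d * φ z.2)
          ∂μ.toSphere.prod (.volumeIoiPow (Module.finrank ℝ E - 1)) := by
      rw [← μ.measurePreserving_homeomorphUnitSphereProd.integral_comp
        (Homeomorph.measurableEmbedding _)]
      congr with x
      have hx : 0 < ‖(x : E)‖ := norm_pos_iff.2 x.2
      have hpolar : h x = ‖(x : E)‖ ^ d * h (‖(x : E)‖⁻¹ • (x : E)) := by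
        rw [← hh _ _ hx, smul_inv_smul₀ hx.ne']
      simp only [homeomorphUnitSphereProd_apply_fst_coe, homeomorphUnitSphereProd_apply_snd_coe]
      rw [hpolar]
      ring
    _ = (∫ y, h y ∂μ.toSphere) * ∫ r : Set.Ioi (0 : ℝ), (r : ℝ) ^ d * φ r
          ∂.volumeIoiPow (Module.finrank ℝ E - 1) :=
      integral_prod_mul (fun y : Metric.sphere (0 : E) 1 => h y)
        fun r : Set.Ioi (0 : ℝ) => (r : ℝ) ^ d * φ r
    _ = _ := by
      congr 1
      simp only [Measure.volumeIoiPow, ENNReal.ofReal]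
      rw [integral_withDensity_eq_integral_smul
          (measurable_subtype_coe.pow_const _).real_toNNReal,
        integral_subtype_comap measurableSet_Ioi fun r : ℝ =>
          toNNReal (r ^ (Module.finrank ℝ E - 1)) • (r ^ d * φ r)]
      refine setIntegral_congr_fun measurableSet_Ioi fun r (hr : 0 < r) => ?_
      rw [NNReal.smul_def, coe_toNNReal _ (by positivity), smul_eq_mul, ← mul_assoc,
        ← rpow_natCast, ← rpow_add hr, Nat.cast_pred hn]
      ring_nf

theorem integral_mul_fun_norm_sq_of_homogeneous (μ : Measure E) [μ.IsAddHaarMeasure] {h : E → ℝ}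
    {d : ℝ} (hh : ∀ (r : ℝ) (x : E), 0 < r → h (r • x) = r ^ d * h x) (φ : ℝ → ℝ) :
    ∫ x, h x * φ (‖x‖ ^ 2) ∂μ =
      (∫ y, h y ∂μ.toSphere) / 2 *
        ∫ u in Set.Ioi (0 : ℝ), u ^ ((d + Module.finrank ℝ E) / 2 - 1) * φ u := by
  rw [integral_mul_fun_norm_of_homogeneous μ hh fun r => φ (r ^ 2), div_mul_eq_mul_div,
    mul_div_assoc, ← integral_comp_rpow_Ioi_of_pos
      (g := fun u => u ^ ((d + Module.finrank ℝ E) / 2 - 1) * φ u) two_pos, ← integral_div]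
  congr 1
  refine setIntegral_congr_fun measurableSet_Ioi fun r (hr : 0 < r) => ?_
  have hexp : d + Module.finrank ℝ E - 1 = (2 - 1) + 2 * ((d + Module.finrank ℝ E) / 2 - 1) := by
    ring
  simp only [smul_eq_mul]
  rw [hexp, rpow_add hr, rpow_mul hr.le, rpow_two]
  ring

end Radial

theorem integral_abs_rpow_mul_exp_neg_sq {s : ℝ} (hs : -1 < s) :
    ∫ x : ℝ, |x| ^ s * exp (-x ^ 2) = Gamma ((s + 1) / 2) := by
  have h := integral_comp_abs (f := fun x => x ^ s * exp (-x ^ 2))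
  have h' := integral_rpow_mul_exp_neg_rpow two_pos hs
  simp only [sq_abs] at h
  simp only [rpow_two] at h'
  rw [h, h']
  ring

theorem Gamma_nat_add_half_div_factorial (k : ℕ) :
    Gamma (k + 1 / 2) / (2 * k).factorial = √π / (4 ^ k * k.factorial) := by
  have h := Gamma_mul_Gamma_add_half (k + 1 / 2)
  have hexp : (1 - 2 * (k + 1 / 2) : ℝ) = -(2 * k : ℕ) := by
    push_cast
    ring
  have hdouble : (2 * (k + 1 / 2) : ℝ) = (2 * k : ℕ) + 1 := by
    push_cast
    ring
  rw [hexp, hdouble, add_assoc, add_halves, Gamma_nat_eq_factorial, Gamma_nat_eq_factorial,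
    rpow_neg zero_le_two, rpow_natCast, pow_mul, show (2 : ℝ) ^ 2 = 4 by norm_num] at h
  rw [div_eq_div_iff (by positivity) (by positivity)]
  field_simp at h ⊢
  linear_combination h

theorem integral_rpow_mul_one_sub_rpow {a b : ℝ} (ha : 0 < a) (hb : 0 < b) :
    ∫ x in (0 : ℝ)..1, x ^ (a - 1) * (1 - x) ^ (b - 1) = Gamma a * Gamma b / Gamma (a + b) := by
  rw [← ProbabilityTheory.beta, ProbabilityTheory.beta_eq_betaIntegralReal a b ha hb]
  have h : Complex.betaIntegral a b =
      ((∫ x in (0 : ℝ)..1, x ^ (a - 1) * (1 - x) ^ (b - 1) : ℝ) : ℂ) := by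
    rw [Complex.betaIntegral, ← intervalIntegral.integral_ofReal]
    refine intervalIntegral.integral_congr fun x hx => ?_
    rw [Set.uIcc_of_le zero_le_one] at hx
    simp [Complex.ofReal_cpow hx.1, Complex.ofReal_cpow (sub_nonneg.2 hx.2)]
  rw [h, Complex.ofReal_re]

theorem hasSum_integral_prod_cos_mul {ι Ω : Type*} [Fintype ι] [MeasurableSpace Ω] {μ : Measure Ω}
    {X : ι → Ω → ℝ} {C : ι → ℝ} {w : Ω → ℝ} (hX : ∀ i, AEStronglyMeasurable (X i) μ)
    (hXC : ∀ i, ∀ᵐ x ∂μ, |X i x| ≤ C i) (hw : Integrable w μ) :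
    HasSum (fun α : ι → ℕ => (∏ i, (-1) ^ α i / ((2 * α i).factorial : ℝ)) *
        ∫ x, (∏ i, X i x ^ (2 * α i)) * w x ∂μ)
      (∫ x, (∏ i, cos (X i x)) * w x ∂μ) := by
  have hC : Summable fun α : ι → ℕ => ∏ i, C i ^ (2 * α i) / ((2 * α i).factorial : ℝ) :=
    (summable_norm_prod_apply fun i => (hasSum_cosh (C i)).summable.norm).of_norm
  simp only [← integral_const_mul, ← mul_assoc, ← Finset.prod_mul_distrib]
  refine hasSum_integral_of_dominated_convergence
    (fun α x => (∏ i, C i ^ (2 * α i) / ((2 * α i).factorial : ℝ)) * ‖w x‖) (fun α => ?_)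
    (fun α => ?_) (.of_forall fun x => hC.mul_right _) ?_ (.of_forall fun x => ?_)
  · exact (Finset.aestronglyMeasurable_fun_prod _ fun i _ => ((hX i).pow _).const_mul _).mul hw.1
  · filter_upwards [Filter.eventually_all.2 hXC] with x hx
    rw [norm_mul, norm_prod]
    gcongr with i
    rw [norm_mul, norm_div, norm_pow, norm_pow, norm_neg, norm_one, one_pow, one_div_mul_eq_div,
      RCLike.norm_natCast, norm_eq_abs]
    gcongr
    exact hx i
  · simp only [tsum_mul_right]
    exact hw.norm.const_mul _
  · simp only [div_mul_eq_mul_div]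
    exact (hasSum_prod_apply (fun i => hasSum_cos (X i x))
      fun i => (hasSum_cos (X i x)).summable.norm).mul_right _

section Dirichlet

variable {ι : Type*} [Fintype ι] {b : ι → ℝ}

theorem integral_prod_abs_rpow_mul_exp_neg_norm_sq (hb : ∀ i, 0 < b i) :
    ∫ x : EuclideanSpace ℝ ι, (∏ i, |x i| ^ (2 * b i - 1)) * exp (-‖x‖ ^ 2) =
      ∏ i, Gamma (b i) := by
  have hprod (x : EuclideanSpace ℝ ι) : (∏ i, |x i| ^ (2 * b i - 1)) * exp (-‖x‖ ^ 2) =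
      ∏ i, |x i| ^ (2 * b i - 1) * exp (-x i ^ 2) := by
    simp [EuclideanSpace.norm_sq_eq, Finset.prod_mul_distrib, ← exp_sum]
  have hcoord (i : ι) : ∫ x : ℝ, |x| ^ (2 * b i - 1) * exp (-x ^ 2) = Gamma (b i) := by
    rw [integral_abs_rpow_mul_exp_neg_sq (by linarith [hb i]), sub_add_cancel,
      mul_div_cancel_left₀ _ two_ne_zero]
  simp only [hprod]
  rw [← (PiLp.volume_preserving_toLp ι).integral_comp
    (MeasurableEquiv.toLp 2 (ι → ℝ)).measurableEmbedding]
  simp only [← hcoord]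
  exact integral_fintype_prod_volume_eq_prod fun i (x : ℝ) => |x| ^ (2 * b i - 1) * exp (-x ^ 2)

theorem prod_abs_rpow_smul {s x : ι → ℝ} {r : ℝ} (hr : 0 < r) :
    ∏ i, |(r • x) i| ^ s i = r ^ (∑ i, s i) * ∏ i, |x i| ^ s i := by
  simp only [Pi.smul_apply, smul_eq_mul, abs_mul, abs_of_pos hr, mul_rpow hr.le (abs_nonneg _),
    Finset.prod_mul_distrib, rpow_sum_of_pos hr]

variable [Nonempty ι]

theorem integral_prod_abs_rpow_mul_fun_norm_sq (φ : ℝ → ℝ) :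
    ∫ x : EuclideanSpace ℝ ι, (∏ i, |x i| ^ (2 * b i - 1)) * φ (‖x‖ ^ 2) =
      (∫ y : Metric.sphere (0 : EuclideanSpace ℝ ι) 1,
        ∏ i, |(y : EuclideanSpace ℝ ι) i| ^ (2 * b i - 1)
        ∂(volume : Measure (EuclideanSpace ℝ ι)).toSphere) / 2 *
        ∫ u in Set.Ioi (0 : ℝ), u ^ (∑ i, b i - 1) * φ u := by
  have hexp : (∑ i, (2 * b i - 1) + Fintype.card ι) / 2 = ∑ i, b i := by
    simp [Finset.sum_sub_distrib, ← Finset.mul_sum]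
  rw [integral_mul_fun_norm_sq_of_homogeneous (d := ∑ i, (2 * b i - 1)) volume
    (fun r x hr => prod_abs_rpow_smul hr) φ, finrank_euclideanSpace, hexp]

theorem integral_toSphere_prod_abs_rpow (hb : ∀ i, 0 < b i) :
    ∫ y : Metric.sphere (0 : EuclideanSpace ℝ ι) 1,
        ∏ i, |(y : EuclideanSpace ℝ ι) i| ^ (2 * b i - 1)
        ∂(volume : Measure (EuclideanSpace ℝ ι)).toSphere =
      2 * (∏ i, Gamma (b i)) / Gamma (∑ i, b i) := by
  have hsum : 0 < ∑ i, b i := Finset.sum_pos (fun i _ => hb i) Finset.univ_nonempty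
  have h := integral_prod_abs_rpow_mul_fun_norm_sq (b := b) fun u => exp (-u)
  simp only [integral_prod_abs_rpow_mul_exp_neg_norm_sq hb] at h
  simp only [mul_comm _ (exp _), ← Gamma_eq_integral hsum] at h
  rw [eq_div_iff (Gamma_pos_of_pos hsum).ne', h]
  ring

theorem setIntegral_closedBall_prod_abs_rpow_mul_rpow {c : ℝ} (hb : ∀ i, 0 < b i) (hc : 0 < c) :
    ∫ x in Metric.closedBall (0 : EuclideanSpace ℝ ι) 1,
        (∏ i, |x i| ^ (2 * b i - 1)) * (1 - ‖x‖ ^ 2) ^ (c - 1) =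
      (∏ i, Gamma (b i)) * Gamma c / Gamma (∑ i, b i + c) := by
  have hsum : 0 < ∑ i, b i := Finset.sum_pos (fun i _ => hb i) Finset.univ_nonempty
  let φ : ℝ → ℝ := (Set.Iic 1).indicator fun u => (1 - u) ^ (c - 1)
  have hball : ∫ x in Metric.closedBall (0 : EuclideanSpace ℝ ι) 1,
        (∏ i, |x i| ^ (2 * b i - 1)) * (1 - ‖x‖ ^ 2) ^ (c - 1) =
      ∫ x : EuclideanSpace ℝ ι, (∏ i, |x i| ^ (2 * b i - 1)) * φ (‖x‖ ^ 2) := by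
    rw [← integral_indicator Metric.isClosed_closedBall.measurableSet]
    classical
    congr with x
    simp [φ, Set.indicator_apply]
  have hradial : ∫ u in Set.Ioi (0 : ℝ), u ^ (∑ i, b i - 1) * φ u =
      Gamma (∑ i, b i) * Gamma c / Gamma (∑ i, b i + c) := by
    rw [← integral_rpow_mul_one_sub_rpow hsum hc, intervalIntegral.integral_of_le zero_le_one,
      ← Set.Ioi_inter_Iic, ← setIntegral_indicator measurableSet_Iic]
    simp only [φ, Set.indicator_mul_right]
  have := (Gamma_pos_of_pos hsum).ne'
  rw [hball, integral_prod_abs_rpow_mul_fun_norm_sq, integral_toSphere_prod_abs_rpow hb, hradial]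
  field_simp

theorem setIntegral_closedBall_prod_pow_mul_rpow (α : ι → ℕ) {c : ℝ} (hc : 0 < c) :
    ∫ x in Metric.closedBall (0 : EuclideanSpace ℝ ι) 1,
        (∏ i, x i ^ (2 * α i)) * (1 - ‖x‖ ^ 2) ^ (c - 1) =
      (∏ i, Gamma (α i + 1 / 2)) * Gamma c /
        Gamma ((∑ i, α i : ℕ) + Fintype.card ι / 2 + c) := by
  have h := setIntegral_closedBall_prod_abs_rpow_mul_rpow (b := fun i => (α i + 1 / 2 : ℝ))
    (fun i => by positivity) hc
  have hexp (i : ι) : (2 * (α i + 1 / 2) - 1 : ℝ) = (2 * α i : ℕ) := by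
    push_cast
    ring
  have hsum : ∑ i, (α i + 1 / 2 : ℝ) = (∑ i, α i : ℕ) + Fintype.card ι / 2 := by
    simp [Finset.sum_add_distrib, div_eq_mul_inv]
  simpa only [hexp, hsum, rpow_natCast, (even_two_mul _).pow_abs] using h

theorem integrableOn_closedBall_one_sub_norm_sq_rpow {c : ℝ} (hc : 0 < c) :
    IntegrableOn (fun x : EuclideanSpace ℝ ι => (1 - ‖x‖ ^ 2) ^ (c - 1))
      (Metric.closedBall 0 1) := by
  -- A nonintegrable function would have integral zero.
  refine .of_integral_ne_zero ?_
  have h := setIntegral_closedBall_prod_pow_mul_rpow (0 : ι → ℕ) hc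
  simp only [Pi.zero_apply, mul_zero, pow_zero, Finset.prod_const_one, one_mul] at h
  rw [h]
  positivity

theorem hasSum_setIntegral_closedBall_prod_cos_mul_rpow (b : ι → ℝ) {c : ℝ} (hc : 0 < c) :
    HasSum (fun α : ι → ℕ => Gamma c * √π ^ Fintype.card ι /
        Gamma ((∑ i, α i : ℕ) + Fintype.card ι / 2 + c) *
          ∏ i, (-(b i ^ 2) / 4) ^ α i / ((α i).factorial : ℝ))
      (∫ x in Metric.closedBall (0 : EuclideanSpace ℝ ι) 1,
        (∏ i, cos (x i * b i)) * (1 - ‖x‖ ^ 2) ^ (c - 1)) := by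
  have hbound (i : ι) : ∀ᵐ x : EuclideanSpace ℝ ι ∂volume.restrict (Metric.closedBall 0 1),
      |x i * b i| ≤ |b i| :=
    ae_restrict_of_forall_mem Metric.isClosed_closedBall.measurableSet fun x hx => by
      rw [abs_mul]
      exact mul_le_of_le_one_left (abs_nonneg _)
        ((PiLp.norm_apply_le x i).trans (mem_closedBall_zero_iff.1 hx))
  convert! hasSum_integral_prod_cos_mul (fun i => by fun_prop) hbound
    (integrableOn_closedBall_one_sub_norm_sq_rpow hc) using 2 with α
  simp only [mul_pow, Finset.prod_mul_distrib, mul_right_comm _ (∏ i, b i ^ (2 * α i))]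
  rw [integral_mul_const, setIntegral_closedBall_prod_pow_mul_rpow α hc]
  have hprod : (∏ i, (-1) ^ α i / ((2 * α i).factorial : ℝ)) *
      (∏ i, Gamma (α i + 1 / 2)) * ∏ i, b i ^ (2 * α i) =
      √π ^ Fintype.card ι * ∏ i, (-(b i ^ 2) / 4) ^ α i / ((α i).factorial : ℝ) := by
    rw [← Finset.card_univ, ← Finset.prod_const, ← Finset.prod_mul_distrib,
      ← Finset.prod_mul_distrib, ← Finset.prod_mul_distrib]
    refine Finset.prod_congr rfl fun i _ => ?_
    rw [div_mul_eq_mul_div, mul_div_assoc, Gamma_nat_add_half_div_factorial, div_pow, neg_pow,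
      pow_mul]
    ring
  linear_combination -Gamma c / Gamma ((∑ i, α i : ℕ) + Fintype.card ι / 2 + c) * hprod

theorem stmt8_general (a : ι → ℝ) {c : ℝ} (hc : 0 < c) (t : ℝ) :
    Summable (fun α : ι → ℕ =>
      |((-1 : ℝ) ^ (∑ i, α i) * (Gamma c * √π ^ Fintype.card ι) * (∏ i, a i ^ (2 * α i)) *
          t ^ (2 * (∑ i, α i) + Fintype.card ι - 1)) /
        (4 ^ (∑ i, α i) * (∏ i, Nat.factorial (α i)) *
          Gamma ((∑ i, α i : ℕ) + Fintype.card ι / 2 + c))|) ∧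
    t ^ (Fintype.card ι - 1) *
        (∫ ω in Metric.closedBall (0 : EuclideanSpace ℝ ι) 1,
          (∏ i, cos (ω i * a i * t)) * (1 - ‖ω‖ ^ 2) ^ (c - 1)) =
      ∑' α : ι → ℕ,
        ((-1 : ℝ) ^ (∑ i, α i) * (Gamma c * √π ^ Fintype.card ι) * (∏ i, a i ^ (2 * α i)) *
            t ^ (2 * (∑ i, α i) + Fintype.card ι - 1)) /
          (4 ^ (∑ i, α i) * (∏ i, Nat.factorial (α i)) *
            Gamma ((∑ i, α i : ℕ) + Fintype.card ι / 2 + c)) := by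
  have hprod (α : ι → ℕ) : ∏ i, (-((a i * t) ^ 2) / 4) ^ α i / ((α i).factorial : ℝ) =
      (-1) ^ (∑ i, α i) * (∏ i, a i ^ (2 * α i)) * t ^ (2 * ∑ i, α i) /
        (4 ^ (∑ i, α i) * (∏ i, (α i).factorial : ℕ)) := by
    push_cast
    simp only [pow_mul t, ← Finset.prod_pow_eq_pow_sum, ← Finset.prod_mul_distrib,
      ← Finset.prod_div_distrib]
    refine Finset.prod_congr rfl fun i _ => ?_
    rw [div_pow, neg_pow, mul_pow, mul_pow, pow_mul, div_div, ← mul_assoc]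
  have hpow (k : ℕ) :
      t ^ (2 * k + Fintype.card ι - 1) = t ^ (2 * k) * t ^ (Fintype.card ι - 1) := by
    rw [← pow_add, Nat.add_sub_assoc Fintype.card_pos]
  suffices h : HasSum _ _ from ⟨h.summable.abs, h.tsum_eq.symm⟩
  simp only [mul_assoc (_ : ℝ) (a _) t]
  convert! (hasSum_setIntegral_closedBall_prod_cos_mul_rpow (fun i => a i * t) hc).mul_left
    (t ^ (Fintype.card ι - 1)) using 2 with α
  rw [hprod, hpow]
  ring

end Dirichlet

theorem mul_two_pi_pow_div_doubleFactorial_eq_Gamma_half (m k : ℕ) (x y z w : ℝ) :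
    x * (2 * π) ^ m * y * z / (2 ^ k * w * Nat.doubleFactorial (2 * k + 2 * m - 1)) =
      x * (Gamma (1 / 2) * √π ^ (2 * m)) * y * z /
        (4 ^ k * w * Gamma (k + (2 * m : ℕ) / 2 + 1 / 2)) := by
  have harg : (k + (2 * m : ℕ) / 2 + 1 / 2 : ℝ) = (k + m : ℕ) + 1 / 2 := by
    push_cast
    ring
  have hfour : (4 : ℝ) ^ k = 2 ^ k * 2 ^ k := by
    rw [← mul_pow]
    norm_num
  have hπ : √π ^ (2 * m) = π ^ m := by rw [pow_mul, sq_sqrt pi_pos.le]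
  rw [harg, Gamma_nat_add_half, Gamma_one_half_eq, hπ, hfour, mul_add, mul_pow, pow_add]
  field_simp

theorem stmt8 (m : ℕ) (hm : 1 ≤ m) (a : Fin (2*m) → ℝ) (t : ℝ) :
    Summable (fun α : Fin (2*m) → ℕ =>
      |((-1:ℝ) ^ (∑ i, α i) * (2*π)^m * (∏ i, (a i) ^ (2 * α i)) *
          t ^ (2 * (∑ i, α i) + 2*m - 1)) /
        (2 ^ (∑ i, α i) * (∏ i, Nat.factorial (α i)) *
          Nat.doubleFactorial (2 * (∑ i, α i) + 2*m - 1))|) ∧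
    t ^ (2*m-1) *
        (∫ ω in Metric.closedBall (0 : EuclideanSpace ℝ (Fin (2*m))) 1,
          (∏ i, Real.cos (ω i * a i * t)) * (1 - ‖ω‖^2) ^ (-(1:ℝ)/2)) =
      ∑' α : Fin (2*m) → ℕ,
        ((-1:ℝ) ^ (∑ i, α i) * (2*π)^m * (∏ i, (a i) ^ (2 * α i)) *
            t ^ (2 * (∑ i, α i) + 2*m - 1)) /
          (2 ^ (∑ i, α i) * (∏ i, Nat.factorial (α i)) *
            Nat.doubleFactorial (2 * (∑ i, α i) + 2*m - 1)) := by
  have : Nonempty (Fin (2 * m)) := ⟨0, by omega⟩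
  simpa only [Fintype.card_fin, mul_two_pi_pow_div_doubleFactorial_eq_Gamma_half,
    show (1 / 2 - 1 : ℝ) = -1 / 2 by norm_num] using stmt8_general a one_half_pos t
end

section
/- Let m ≥ 1, n = 2m, and let a₁,…,a_{2m} be real numbers, not all zero. Define G : (0,∞) → ℝ by G(t) = t^{2m−1} ∫_{‖ω‖≤1, ω∈ℝ^{2m}} cos(tω₁a₁)⋯cos(tω_{2m}a_{2m}) · (1−‖ω‖²)^{−1/2} dω. Then for every t > 0, sin(t·√(a₁²+⋯+a_{2m}²)) / √(a₁²+⋯+a_{2m}²) = (1/(2π)^m) · (D^{m−1}G)(t). -/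
open MeasureTheory Real

/-!
The weight `(1 - ‖ω‖²)^(-1/2)` is invariant under reflections, so averaging over the signs of the
coordinates replaces the product of cosines by the plane wave `cos (t⟨a, ω⟩)`, whose integral
depends on `a` only through `|a|`. By Archimedes' projection theorem, integrating the weight along
a line gives `π` whenever the line meets the open ball. Slicing the ball orthogonally to `a` thus
leaves the weight `(1 - s²)^(m-1)` times `π` and the volume of the unit ball of `ℝ^(2m-2)`, so that
`G(t)` is a constant multiple of `∫_{-t}^t cos(|a|u) (t² - u²)^(m-1) du`. The operator `D` lowers
the exponent of `t² - u²` by one, so `m - 1` applications leave `∫_{-t}^t cos(|a|u) du`.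
-/

open Module
open scoped RealInnerProductSpace Nat

section Descent

/-- The Poisson integral `∫_{-t}^t g(u) (t² - u²)^k du`, through which plane-wave integrals over
the ball are expressed; `t` may be negative, with the integral oriented from `-t` to `t`. -/
noncomputable def poissonIntegral (g : ℝ → ℝ) (k : ℕ) (t : ℝ) : ℝ :=
  ∫ u in -t..t, g u * (t ^ 2 - u ^ 2) ^ k

lemma pow_mul_integral_comp_mul_eq_poissonIntegral (g : ℝ → ℝ) (k : ℕ) (t : ℝ) :
    t ^ (2 * k + 1) * ∫ s in (-1 : ℝ)..1, g (t * s) * (1 - s ^ 2) ^ k = poissonIntegral g k t := by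
  have hsub := intervalIntegral.smul_integral_comp_mul_left (a := -1) (b := 1)
    (fun u => g u * (t ^ 2 - u ^ 2) ^ k) t
  rw [mul_neg_one, mul_one, smul_eq_mul] at hsub
  rw [poissonIntegral, ← hsub, pow_succ', mul_assoc, ← intervalIntegral.integral_const_mul]
  refine congrArg (t * ·) (intervalIntegral.integral_congr fun s _ => ?_)
  simp only [mul_pow, pow_mul, ← mul_one_sub]
  ring

variable {g : ℝ → ℝ}

lemma poissonIntegral_succ (hg : Continuous g) (k : ℕ) (t : ℝ) :
    poissonIntegral g (k + 1) t =
      t ^ 2 * poissonIntegral g k t - poissonIntegral (fun u => g u * u ^ 2) k t := by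
  rw [poissonIntegral, poissonIntegral, poissonIntegral, ← intervalIntegral.integral_const_mul,
    ← intervalIntegral.integral_sub ((by fun_prop : Continuous _).intervalIntegrable _ _)
      ((by fun_prop : Continuous _).intervalIntegrable _ _)]
  exact intervalIntegral.integral_congr fun u _ => by ring

lemma hasDerivAt_poissonIntegral_zero (hg : Continuous g) (t : ℝ) :
    HasDerivAt (poissonIntegral g 0) (g t + g (-t)) t := by
  have hright (x : ℝ) : HasDerivAt (fun y => ∫ u in (0 : ℝ)..y, g u) (g x) x :=
    hg.integral_hasStrictDerivAt 0 x |>.hasDerivAt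
  have hleft := (hright (-t)).comp t (hasDerivAt_neg t)
  convert! (hright t).sub hleft using 1
  · ext y
    simp [poissonIntegral, intervalIntegral.integral_interval_sub_left,
      hg.intervalIntegrable]
  · ring

lemma hasDerivAt_poissonIntegral_succ (hg : Continuous g) (k : ℕ) (t : ℝ) :
    HasDerivAt (poissonIntegral g (k + 1)) (2 * (k + 1) * t * poissonIntegral g k t) t := by
  induction k generalizing g with
  | zero =>
    have h := ((hasDerivAt_pow 2 t).mul (hasDerivAt_poissonIntegral_zero hg t)).sub
      (hasDerivAt_poissonIntegral_zero (hg.mul (continuous_pow 2)) t)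
    rw [funext (poissonIntegral_succ hg 0)]
    refine h.congr_deriv ?_
    simp only [Pi.mul_apply]
    push_cast
    ring
  | succ k ih =>
    have h := ((hasDerivAt_pow 2 t).mul (ih hg)).sub (ih (hg.mul (continuous_pow 2)))
    rw [funext (poissonIntegral_succ hg (k + 1))]
    refine h.congr_deriv ?_
    push_cast
    linear_combination -2 * (k + 1) * t * poissonIntegral_succ hg k t

lemma Dop_smul (c : ℝ) (f : ℝ → ℝ) : Dop (c • f) = c • Dop f := by
  ext t
  simp only [Dop, Pi.smul_apply, deriv_const_smul_field, smul_div_assoc]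

lemma Dop_iterate_smul (k : ℕ) (c : ℝ) (f : ℝ → ℝ) : Dop^[k] (c • f) = c • Dop^[k] f :=
  Function.Commute.iterate_left (g := (c • ·)) (Dop_smul c) k f

lemma Dop_poissonIntegral_succ (hg : Continuous g) (k : ℕ) :
    Dop (poissonIntegral g (k + 1)) = (2 * (k + 1) : ℝ) • poissonIntegral g k := by
  ext t
  rw [Dop, (hasDerivAt_poissonIntegral_succ hg k t).deriv, Pi.smul_apply, smul_eq_mul]
  obtain rfl | ht := eq_or_ne t 0
  · simp [poissonIntegral]
  · field_simp

lemma Dop_iterate_poissonIntegral (hg : Continuous g) (k : ℕ) :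
    Dop^[k] (poissonIntegral g k) = (2 ^ k * k ! : ℝ) • poissonIntegral g 0 := by
  induction k with
  | zero => simp
  | succ k ih =>
    rw [Function.iterate_succ_apply, Dop_poissonIntegral_succ hg, Dop_iterate_smul, ih, smul_smul,
      Nat.factorial_succ]
    congr 1
    push_cast
    ring

lemma poissonIntegral_cos_zero {r : ℝ} (hr : r ≠ 0) (t : ℝ) :
    poissonIntegral (fun u => cos (r * u)) 0 t = 2 * (sin (t * r) / r) := by
  simp only [poissonIntegral, pow_zero, mul_one]
  rw [intervalIntegral.integral_comp_mul_left _ hr, integral_cos, mul_neg, sin_neg, smul_eq_mul,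
    mul_comm r]
  ring

end Descent

section SignAverage

variable {ι : Type*} [Fintype ι]

lemma prod_cos_eq_sum_signs [DecidableEq ι] (y : ι → ℝ) :
    ∏ i, cos (y i) =
      (2 ^ Fintype.card ι)⁻¹ * ∑ ε : ι → ℤˣ, cos (∑ i, ((ε i : ℤ) : ℝ) * y i) := by
  have hcos (x : ℝ) :
      Complex.cos x = 2⁻¹ * ∑ ε : ℤˣ, Complex.exp ((((ε : ℤ) : ℝ) * x : ℝ) * Complex.I) := by
    simp only [Complex.cos, UnitsInt.univ, Finset.sum_pair (units_ne_neg_self 1), Units.val_one,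
      Units.val_neg, Int.cast_one, Int.cast_neg, one_mul, neg_mul, Complex.ofReal_neg]
    ring
  have hprod : ((∏ i, cos (y i) : ℝ) : ℂ) = (2 ^ Fintype.card ι : ℝ)⁻¹ *
      ∑ ε : ι → ℤˣ, Complex.exp ((∑ i, ((ε i : ℤ) : ℝ) * y i : ℝ) * Complex.I) := by
    push_cast
    simp only [hcos, Finset.prod_mul_distrib, Finset.prod_const, Fintype.prod_sum,
      ← Complex.exp_sum, Finset.sum_mul]
    simp
  have hre := congrArg Complex.re hprod
  rw [Complex.re_ofReal_mul, Complex.re_sum] at hre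
  simpa only [Complex.exp_ofReal_mul_I_re, Complex.ofReal_re] using hre

lemma integral_inner_norm_eq_of_norm_eq {E : Type*} [NormedAddCommGroup E]
    [InnerProductSpace ℝ E] [FiniteDimensional ℝ E] [MeasurableSpace E] [BorelSpace E]
    {u v : E} (huv : ‖u‖ = ‖v‖) (f : ℝ → ℝ → ℝ) :
    ∫ x, f ⟪u, x⟫ ‖x‖ = ∫ x, f ⟪v, x⟫ ‖x‖ := by
  let R : E ≃ₗᵢ[ℝ] E := (ℝ ∙ (u - v))ᗮ.reflection
  have hR : R u = v := Submodule.reflection_sub huv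
  rw [← R.measurePreserving.integral_comp R.toHomeomorph.measurableEmbedding
    fun x => f ⟪v, x⟫ ‖x‖]
  simp only [← hR, R.inner_map_map, R.norm_map]

lemma integral_prod_cos_mul_norm (b : ι → ℝ) {w : ℝ → ℝ}
    (hw : Integrable fun x : EuclideanSpace ℝ ι => w ‖x‖) :
    ∫ x : EuclideanSpace ℝ ι, (∏ i, cos (b i * x i)) * w ‖x‖ =
      ∫ x : EuclideanSpace ℝ ι, cos ⟪WithLp.toLp 2 b, x⟫ * w ‖x‖ := by
  classical
  let v (ε : ι → ℤˣ) : EuclideanSpace ℝ ι := WithLp.toLp 2 fun i => ((ε i : ℤ) : ℝ) * b i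
  have hv (ε : ι → ℤˣ) : ‖v ε‖ = ‖WithLp.toLp 2 b‖ := by
    simp only [v, EuclideanSpace.norm_eq, norm_eq_abs, sq_abs, mul_pow, ← Int.cast_pow,
      ← Units.val_pow_eq_pow_val, Int.units_sq, Units.val_one, Int.cast_one, one_mul]
  have hinner (ε : ι → ℤˣ) (x : EuclideanSpace ℝ ι) :
      ⟪v ε, x⟫ = ∑ i, ((ε i : ℤ) : ℝ) * (b i * x i) := by
    simp only [v, PiLp.inner_apply, RCLike.inner_apply, conj_trivial]
    exact Finset.sum_congr rfl fun _ _ => by ring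
  have hint (ε : ι → ℤˣ) : Integrable fun x => cos ⟪v ε, x⟫ * w ‖x‖ :=
    hw.bdd_mul (c := 1) (by fun_prop : Continuous _).aestronglyMeasurable
      (.of_forall fun _ => abs_cos_le_one _)
  calc ∫ x : EuclideanSpace ℝ ι, (∏ i, cos (b i * x i)) * w ‖x‖
      = ∫ x, (2 ^ Fintype.card ι)⁻¹ * ∑ ε : ι → ℤˣ, cos ⟪v ε, x⟫ * w ‖x‖ := by
        simp only [hinner, prod_cos_eq_sum_signs, Finset.sum_mul, mul_assoc]
    _ = (2 ^ Fintype.card ι)⁻¹ * ∑ ε : ι → ℤˣ, ∫ x, cos ⟪v ε, x⟫ * w ‖x‖ := by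
        rw [integral_const_mul, integral_finsetSum _ fun ε _ => hint ε]
    _ = (2 ^ Fintype.card ι)⁻¹ *
          ∑ _ε : ι → ℤˣ, ∫ x, cos ⟪WithLp.toLp 2 b, x⟫ * w ‖x‖ := by
        congr! 2 with ε
        exact integral_inner_norm_eq_of_norm_eq (hv ε) fun y r => cos y * w r
    _ = _ := by simp

end SignAverage

section Slicing

variable {E : Type*} [NormedAddCommGroup E] [InnerProductSpace ℝ E] [FiniteDimensional ℝ E]
  [MeasurableSpace E] [BorelSpace E] {n : ℕ} {u : E}

lemma exists_measurePreserving_inner_norm_sq (hE : finrank ℝ E = n + 1) (hu : ‖u‖ = 1) :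
    ∃ e : E ≃ᵐ ℝ × EuclideanSpace ℝ (Fin n), MeasurePreserving e ∧
      ∀ x, (e x).1 = ⟪u, x⟫ ∧ (e x).1 ^ 2 + ‖(e x).2‖ ^ 2 = ‖x‖ ^ 2 := by
  have : Fact (finrank ℝ E = n + 1) := ⟨hE⟩
  have hu0 : u ≠ 0 := norm_ne_zero_iff.1 (hu ▸ one_ne_zero)
  let Φ : E ≃ₗᵢ[ℝ] WithLp 2 (ℝ × EuclideanSpace ℝ (Fin n)) :=
    (ℝ ∙ u).orthogonalDecomposition.trans <|
      .withLpProdCongr 2 (LinearIsometryEquiv.toSpanUnitSingleton u hu).symm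
        (OrthonormalBasis.fromOrthogonalSpanSingleton n hu0).repr
  have hfst (x : E) : (Φ x).fst = ⟪u, x⟫ := by
    have hx : (ℝ ∙ u).orthogonalProjectionOnto x =
        LinearIsometryEquiv.toSpanUnitSingleton u hu ⟪u, x⟫ := by
      ext
      simpa using Submodule.starProjection_unit_singleton ℝ hu x
    exact (LinearIsometryEquiv.symm_apply_eq _).2 hx
  refine ⟨Φ.toHomeomorph.toMeasurableEquiv.trans (MeasurableEquiv.toLp 2 _).symm,
    Φ.measurePreserving.trans (WithLp.volume_preserving_ofLp _ _), fun x => ⟨hfst x, ?_⟩⟩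
  rw [← Φ.norm_map, WithLp.prod_norm_sq_eq_of_L2, norm_eq_abs, sq_abs]
  rfl

variable (f : ℝ → ℝ → ℝ)

lemma integrable_inner_norm_sq_iff (hE : finrank ℝ E = n + 1) (hu : ‖u‖ = 1) :
    Integrable (fun x : E => f ⟪u, x⟫ (‖x‖ ^ 2)) ↔
      Integrable fun p : ℝ × EuclideanSpace ℝ (Fin n) => f p.1 (p.1 ^ 2 + ‖p.2‖ ^ 2) := by
  obtain ⟨e, he, hcoord⟩ := exists_measurePreserving_inner_norm_sq hE hu
  rw [← he.integrable_comp_emb e.measurableEmbedding]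
  simp only [Function.comp_def, (hcoord _).2]
  simp only [(hcoord _).1]

lemma integral_inner_norm_sq (hE : finrank ℝ E = n + 1) (hu : ‖u‖ = 1) :
    ∫ x : E, f ⟪u, x⟫ (‖x‖ ^ 2) =
      ∫ p : ℝ × EuclideanSpace ℝ (Fin n), f p.1 (p.1 ^ 2 + ‖p.2‖ ^ 2) := by
  obtain ⟨e, he, hcoord⟩ := exists_measurePreserving_inner_norm_sq hE hu
  rw [← he.integral_comp']
  simp only [(hcoord _).2]
  simp only [(hcoord _).1]

end Slicing

lemma exists_norm_eq_one_norm_smul_eq {E : Type*} [NormedAddCommGroup E] [NormedSpace ℝ E]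
    [Nontrivial E] (v : E) : ∃ u : E, ‖u‖ = 1 ∧ ‖v‖ • u = v := by
  obtain rfl | hv := eq_or_ne v 0
  · obtain ⟨u, hu⟩ := exists_norm_eq E zero_le_one
    exact ⟨u, hu, by rw [norm_zero, zero_smul]⟩
  · exact ⟨‖v‖⁻¹ • v, norm_smul_inv_norm hv, smul_inv_smul₀ (norm_ne_zero_iff.2 hv) v⟩

section HemisphereWeight

-- Since `√` vanishes on negative reals and `0⁻¹ = 0`, the weight `(√(b - ‖x‖ ^ 2))⁻¹` is zero off
-- the ball, so it can be integrated over the whole space.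
lemma inv_sqrt_sub_eq_zero {b y : ℝ} (h : b ≤ y) : (√(b - y))⁻¹ = 0 := by
  rw [sqrt_eq_zero_of_nonpos (sub_nonpos.2 h), inv_zero]

lemma hasDerivAt_arcsin_of_mem_Ioo {x : ℝ} (hx : x ∈ Set.Ioo (-1) 1) :
    HasDerivAt arcsin (√(1 - x ^ 2))⁻¹ x := by
  simpa using hasDerivAt_arcsin hx.1.ne' hx.2.ne

lemma inv_sqrt_one_sub_sq_eq_zero_of_notMem_Ioc {x : ℝ} (hx : x ∉ Set.Ioc (-1) 1) :
    (√(1 - x ^ 2))⁻¹ = 0 :=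
  inv_sqrt_sub_eq_zero <| (one_le_sq_iff_one_le_abs x).2 <| by
    by_contra! h
    exact hx ⟨(abs_lt.1 h).1, (abs_lt.1 h).2.le⟩

lemma integrableOn_inv_sqrt_one_sub_sq :
    IntegrableOn (fun s : ℝ => (√(1 - s ^ 2))⁻¹) (Set.Ioc (-1) 1) :=
  intervalIntegral.integrableOn_deriv_of_nonneg continuous_arcsin.continuousOn
    (fun _ => hasDerivAt_arcsin_of_mem_Ioo) fun _ _ => by positivity

lemma integral_inv_sqrt_one_sub_sq : ∫ s : ℝ, (√(1 - s ^ 2))⁻¹ = π := by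
  rw [← setIntegral_eq_integral_of_forall_compl_eq_zero
      fun _ => inv_sqrt_one_sub_sq_eq_zero_of_notMem_Ioc,
    ← intervalIntegral.integral_of_le (by norm_num),
    intervalIntegral.integral_eq_sub_of_hasDerivAt_of_le (by norm_num)
      continuous_arcsin.continuousOn (fun _ => hasDerivAt_arcsin_of_mem_Ioo)
      ((intervalIntegrable_iff_integrableOn_Ioc_of_le (by norm_num)).2
        integrableOn_inv_sqrt_one_sub_sq),
    arcsin_one, arcsin_neg_one]
  ring

lemma inv_sqrt_sub_sq_eq_mul {b : ℝ} (hb : 0 < b) (s : ℝ) :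
    (√(b - s ^ 2))⁻¹ = (√b)⁻¹ * (√(1 - ((√b)⁻¹ * s) ^ 2))⁻¹ := by
  rw [← mul_inv, ← sqrt_mul hb.le, mul_pow, inv_pow, sq_sqrt hb.le, mul_sub, mul_one,
    mul_inv_cancel_left₀ hb.ne']

lemma integrable_inv_sqrt_sub_sq (b : ℝ) : Integrable fun s : ℝ => (√(b - s ^ 2))⁻¹ := by
  obtain hb | hb := le_or_gt b 0
  · simp only [inv_sqrt_sub_eq_zero (hb.trans (sq_nonneg _))]
    exact integrable_zero _ _ _
  · simp only [inv_sqrt_sub_sq_eq_mul hb]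
    exact ((integrableOn_inv_sqrt_one_sub_sq.integrable_of_forall_notMem_eq_zero
      fun _ => inv_sqrt_one_sub_sq_eq_zero_of_notMem_Ioc).comp_mul_left'
        (inv_ne_zero (sqrt_pos.2 hb).ne')).const_mul _

lemma integral_inv_sqrt_sub_sq {b : ℝ} (hb : 0 < b) : ∫ s : ℝ, (√(b - s ^ 2))⁻¹ = π := by
  have hsqrt : 0 < √b := sqrt_pos.2 hb
  simp only [inv_sqrt_sub_sq_eq_mul hb]
  rw [integral_const_mul, Measure.integral_comp_mul_left (fun s => (√(1 - s ^ 2))⁻¹),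
    integral_inv_sqrt_one_sub_sq, inv_inv, abs_of_pos hsqrt, smul_eq_mul,
    inv_mul_cancel_left₀ hsqrt.ne']

lemma integral_inv_sqrt_sub_sq_add_norm_sq {F : Type*} [NormedAddCommGroup F] (b : ℝ) (y : F) :
    ∫ s : ℝ, (√(b - (s ^ 2 + ‖y‖ ^ 2)))⁻¹ = (Metric.ball (0 : F) √b).indicator (fun _ => π) y := by
  have hmem : y ∈ Metric.ball (0 : F) √b ↔ 0 < b - ‖y‖ ^ 2 := by
    rw [mem_ball_zero_iff, lt_sqrt (norm_nonneg y), sub_pos]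
  simp only [sub_add_eq_sub_sub_swap]
  by_cases hy : y ∈ Metric.ball (0 : F) √b
  · rw [Set.indicator_of_mem hy, integral_inv_sqrt_sub_sq (hmem.1 hy)]
  · rw [Set.indicator_of_notMem hy]
    have hb := not_lt.1 (hmem.not.1 hy)
    simp only [inv_sqrt_sub_eq_zero (hb.trans (sq_nonneg _)), integral_zero]

lemma integrable_inv_sqrt_sub_sq_add_norm_sq (n : ℕ) (b : ℝ) :
    Integrable fun p : ℝ × EuclideanSpace ℝ (Fin n) => (√(b - (p.1 ^ 2 + ‖p.2‖ ^ 2)))⁻¹ := by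
  have hmeas : Measurable fun p : ℝ × EuclideanSpace ℝ (Fin n) =>
      (√(b - (p.1 ^ 2 + ‖p.2‖ ^ 2)))⁻¹ := by fun_prop
  refine (integrable_prod_iff' hmeas.aestronglyMeasurable).2 ⟨.of_forall fun y => ?_, ?_⟩
  · simpa only [sub_add_eq_sub_sub_swap] using integrable_inv_sqrt_sub_sq (b - ‖y‖ ^ 2)
  · simp only [norm_of_nonneg (inv_nonneg.2 (sqrt_nonneg _)), integral_inv_sqrt_sub_sq_add_norm_sq]
    exact (integrable_indicator_iff measurableSet_ball).2
      (integrableOn_const measure_ball_lt_top.ne)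

variable {E : Type*} [NormedAddCommGroup E] [InnerProductSpace ℝ E] [FiniteDimensional ℝ E]
  [MeasurableSpace E] [BorelSpace E] {n : ℕ}

lemma integrable_inv_sqrt_sub_norm_sq [Nontrivial E] (b : ℝ) :
    Integrable fun x : E => (√(b - ‖x‖ ^ 2))⁻¹ := by
  obtain ⟨u, hu⟩ := exists_norm_eq E zero_le_one
  obtain ⟨n, hn⟩ := Nat.exists_eq_succ_of_ne_zero (finrank_pos (R := ℝ) (M := E)).ne'
  exact (integrable_inner_norm_sq_iff (fun _ q => (√(b - q))⁻¹) hn hu).2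
    (integrable_inv_sqrt_sub_sq_add_norm_sq n b)

lemma integral_inv_sqrt_sub_norm_sq (hE : finrank ℝ E = n + 1) {b : ℝ} (hb : 0 < b) :
    ∫ x : E, (√(b - ‖x‖ ^ 2))⁻¹ =
      π * volume.real (Metric.ball (0 : EuclideanSpace ℝ (Fin n)) 1) * √b ^ n := by
  have : Nontrivial E := nontrivial_of_finrank_pos (R := ℝ) (hE ▸ n.succ_pos)
  obtain ⟨u, hu⟩ := exists_norm_eq E zero_le_one
  rw [integral_inner_norm_sq (fun _ q => (√(b - q))⁻¹) hE hu, Measure.volume_eq_prod,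
    integral_prod_symm _ (integrable_inv_sqrt_sub_sq_add_norm_sq n b)]
  simp only [integral_inv_sqrt_sub_sq_add_norm_sq]
  rw [integral_indicator_const _ measurableSet_ball, measureReal_def,
    Measure.addHaar_ball_of_pos _ _ (sqrt_pos.2 hb), ENNReal.toReal_mul,
    ENNReal.toReal_ofReal (by positivity), finrank_euclideanSpace_fin, ← measureReal_def,
    smul_eq_mul]
  ring

lemma integral_comp_inner_mul_inv_sqrt_of_norm_eq_one (hE : finrank ℝ E = n + 2) {u : E}
    (hu : ‖u‖ = 1) {f : ℝ → ℝ} (hf : Integrable fun x : E => f ⟪u, x⟫ * (√(1 - ‖x‖ ^ 2))⁻¹) :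
    ∫ x : E, f ⟪u, x⟫ * (√(1 - ‖x‖ ^ 2))⁻¹ =
      π * volume.real (Metric.ball (0 : EuclideanSpace ℝ (Fin n)) 1) *
        ∫ s in (-1 : ℝ)..1, f s * √(1 - s ^ 2) ^ n := by
  let g (s q : ℝ) : ℝ := f s * (√(1 - q))⁻¹
  rw [integral_inner_norm_sq g hE hu, Measure.volume_eq_prod,
    integral_prod _ ((integrable_inner_norm_sq_iff g hE hu).1 hf),
    intervalIntegral.integral_of_le (by norm_num), integral_Ioc_eq_integral_Ioo,
    ← integral_const_mul, ← setIntegral_eq_integral_of_forall_compl_eq_zero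
      (s := Set.Ioo (-1 : ℝ) 1)]
  · refine setIntegral_congr_fun measurableSet_Ioo fun s hs => ?_
    have hpos : 0 < 1 - s ^ 2 := sub_pos.2 ((sq_lt_one_iff_abs_lt_one s).2 (abs_lt.2 hs))
    simp only [g, ← sub_sub, integral_const_mul,
      integral_inv_sqrt_sub_norm_sq finrank_euclideanSpace_fin hpos]
    ring
  · intro s hs
    have hle : 1 ≤ s ^ 2 := by
      by_contra! h
      exact hs (abs_lt.1 ((sq_lt_one_iff_abs_lt_one s).1 h))
    simp only [g, inv_sqrt_sub_eq_zero (hle.trans (le_add_of_nonneg_right (sq_nonneg _))),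
      mul_zero, integral_zero]

lemma integral_comp_inner_mul_inv_sqrt (hE : finrank ℝ E = n + 2) (v : E) {f : ℝ → ℝ}
    (hf : Integrable fun x : E => f ⟪v, x⟫ * (√(1 - ‖x‖ ^ 2))⁻¹) :
    ∫ x : E, f ⟪v, x⟫ * (√(1 - ‖x‖ ^ 2))⁻¹ =
      π * volume.real (Metric.ball (0 : EuclideanSpace ℝ (Fin n)) 1) *
        ∫ s in (-1 : ℝ)..1, f (‖v‖ * s) * √(1 - s ^ 2) ^ n := by
  have : Nontrivial E := nontrivial_of_finrank_pos (R := ℝ) (hE ▸ (n + 1).succ_pos)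
  obtain ⟨u, hu, huv⟩ := exists_norm_eq_one_norm_smul_eq v
  have hinner (x : E) : ⟪v, x⟫ = ‖v‖ * ⟪u, x⟫ := by rw [← real_inner_smul_left, huv]
  simp only [hinner] at hf ⊢
  exact integral_comp_inner_mul_inv_sqrt_of_norm_eq_one (f := fun y => f (‖v‖ * y)) hE hu hf

end HemisphereWeight

section PlaneWaves

-- For `u < 0` both sides are zero: `u ^ y` is then `|u| ^ y * cos (y * π)`.
lemma rpow_neg_one_div_two (u : ℝ) : u ^ (-(1 : ℝ) / 2) = (√u)⁻¹ := by
  obtain hu | hu := lt_or_ge u 0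
  · have hcos : cos (-(1 : ℝ) / 2 * π) = 0 := by
      rw [neg_div, neg_mul, cos_neg, one_div_mul_eq_div, cos_pi_div_two]
    rw [rpow_def_of_neg hu, hcos, mul_zero, sqrt_eq_zero_of_nonpos hu.le, inv_zero]
  · rw [sqrt_eq_rpow, ← rpow_neg hu, neg_div]

lemma setIntegral_closedBall_prod_cos {ι : Type*} [Fintype ι] {n : ℕ}
    (hι : Fintype.card ι = n + 2) (b : ι → ℝ) :
    ∫ x in Metric.closedBall (0 : EuclideanSpace ℝ ι) 1,
        (∏ i, cos (b i * x i)) * (1 - ‖x‖ ^ 2) ^ (-(1 : ℝ) / 2) =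
      π * volume.real (Metric.ball (0 : EuclideanSpace ℝ (Fin n)) 1) *
        ∫ s in (-1 : ℝ)..1, cos (‖WithLp.toLp 2 b‖ * s) * √(1 - s ^ 2) ^ n := by
  have hE : finrank ℝ (EuclideanSpace ℝ ι) = n + 2 := by rw [finrank_euclideanSpace, hι]
  have : Nontrivial (EuclideanSpace ℝ ι) :=
    nontrivial_of_finrank_pos (R := ℝ) (hE ▸ (n + 1).succ_pos)
  have hw : Integrable fun x : EuclideanSpace ℝ ι => (√(1 - ‖x‖ ^ 2))⁻¹ :=
    integrable_inv_sqrt_sub_norm_sq 1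
  simp only [rpow_neg_one_div_two]
  rw [setIntegral_eq_integral_of_forall_compl_eq_zero fun x hx => ?_,
    integral_prod_cos_mul_norm b (w := fun r => (√(1 - r ^ 2))⁻¹) hw]
  · exact integral_comp_inner_mul_inv_sqrt hE _ <|
      hw.bdd_mul (c := 1) (by fun_prop : Continuous _).aestronglyMeasurable
        (.of_forall fun _ => abs_cos_le_one _)
  · have hx1 : 1 ≤ ‖x‖ := (not_le.1 (mt mem_closedBall_zero_iff.2 hx)).le
    rw [inv_sqrt_sub_eq_zero (one_le_pow₀ hx1), mul_zero]

lemma volume_real_ball_one_euclideanSpace_even (k : ℕ) :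
    volume.real (Metric.ball (0 : EuclideanSpace ℝ (Fin (2 * k))) 1) = π ^ k / k ! := by
  obtain rfl | hk := Nat.eq_zero_or_pos k
  · have : IsEmpty (Fin (2 * 0)) := Fin.isEmpty
    simp [measureReal_def, volume_euclideanSpace_eq_dirac]
  · have : Nontrivial (EuclideanSpace ℝ (Fin (2 * k))) :=
      nontrivial_of_finrank_pos (R := ℝ) (by rw [finrank_euclideanSpace_fin]; positivity)
    rw [measureReal_def, InnerProductSpace.volume_ball_of_dim_even finrank_euclideanSpace_fin,
      ENNReal.ofReal_one, one_pow, one_mul, ENNReal.toReal_ofReal (by positivity)]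

lemma pow_mul_setIntegral_closedBall_prod_cos (k : ℕ) (a : Fin (2 * k + 2) → ℝ) (t : ℝ) :
    t ^ (2 * k + 1) * ∫ x in Metric.closedBall (0 : EuclideanSpace ℝ (Fin (2 * k + 2))) 1,
        (∏ i, cos (t * x i * a i)) * (1 - ‖x‖ ^ 2) ^ (-(1 : ℝ) / 2) =
      π ^ (k + 1) / k ! * poissonIntegral (fun u => cos (√(∑ i, a i ^ 2) * u)) k t := by
  have hnorm : ‖WithLp.toLp 2 (t • a)‖ = |t| * √(∑ i, a i ^ 2) := by
    rw [WithLp.toLp_smul, norm_smul, norm_eq_abs, EuclideanSpace.norm_eq]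
    simp only [norm_eq_abs, sq_abs]
  have hcos (s : ℝ) : cos (|t| * √(∑ i, a i ^ 2) * s) = cos (√(∑ i, a i ^ 2) * (t * s)) := by
    rw [mul_left_comm, ← mul_assoc, ← cos_abs, ← cos_abs (t * _ * s)]
    simp only [abs_mul, abs_abs]
  have hweight : ∫ s in (-1 : ℝ)..1, cos (√(∑ i, a i ^ 2) * (t * s)) * √(1 - s ^ 2) ^ (2 * k) =
      ∫ s in (-1 : ℝ)..1, cos (√(∑ i, a i ^ 2) * (t * s)) * (1 - s ^ 2) ^ k := by
    refine intervalIntegral.integral_congr fun s hs => ?_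
    rw [Set.uIcc_of_le (by norm_num)] at hs
    have hs1 : 0 ≤ 1 - s ^ 2 := sub_nonneg.2 ((sq_le_one_iff_abs_le_one s).2 (abs_le.2 hs))
    simp only [pow_mul, sq_sqrt hs1]
  have hball := setIntegral_closedBall_prod_cos (Fintype.card_fin (2 * k + 2)) (t • a)
  simp only [Pi.smul_apply, smul_eq_mul, hnorm, hcos, hweight,
    volume_real_ball_one_euclideanSpace_even] at hball
  simp only [mul_right_comm t]
  rw [hball, ← pow_mul_integral_comp_mul_eq_poissonIntegral]
  ring

end PlaneWaves

theorem stmt9 (m : ℕ) (hm : 1 ≤ m) (a : Fin (2*m) → ℝ) (ha : a ≠ 0)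
    (G : ℝ → ℝ)
    (hG : ∀ t : ℝ, G t = t ^ (2*m-1) *
      ∫ ω in Metric.closedBall (0 : EuclideanSpace ℝ (Fin (2*m))) 1,
        (∏ i, Real.cos (t * ω i * a i)) * (1 - ‖ω‖^2) ^ (-(1:ℝ)/2)) :
    ∀ t ∈ Set.Ioi (0:ℝ),
      Real.sin (t * Real.sqrt (∑ i, (a i)^2)) / Real.sqrt (∑ i, (a i)^2) =
        (1 / (2*π)^m) * (Dop^[m-1] G) t := by
  intro t _
  obtain ⟨k, rfl⟩ := Nat.exists_eq_add_of_le' hm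
  have hr : √(∑ i, a i ^ 2) ≠ 0 := by
    obtain ⟨i, hi⟩ := Function.ne_iff.1 ha
    exact (sqrt_pos.2 <| Finset.sum_pos' (fun j _ => sq_nonneg (a j))
      ⟨i, Finset.mem_univ i, sq_pos_of_ne_zero hi⟩).ne'
  have hpoisson : G = (π ^ (k + 1) / k ! : ℝ) •
      poissonIntegral (fun u => cos (√(∑ i, a i ^ 2) * u)) k :=
    funext fun s => (hG s).trans (pow_mul_setIntegral_closedBall_prod_cos k a s)
  rw [Nat.add_sub_cancel, hpoisson, Dop_iterate_smul,
    Dop_iterate_poissonIntegral (by fun_prop), Pi.smul_apply, Pi.smul_apply,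
    poissonIntegral_cos_zero hr, smul_eq_mul, smul_eq_mul]
  field_simp
  ring
end
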